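/- Let X be a compact metric space, θ: X → X a homeomorphism, and ψ0: X → GL(d,ℝ) continuous. The cocycle admits a dominated splitting E ⊕ F of index p if and only if there exist c > 0 and μ > 0 such that σ_{p+1}(ψ^n_x)/σ_p(ψ^n_x) ≤ c·e^{−μn} for every x ∈ X and every n ≥ 0. Moreover, in that case the bundles are given by F_x = lim_{n→+∞} U_p(ψ^n_{θ^{−n}(x)}) and E_x = lim_{n→+∞} U_{d−p}(ψ^{−n}_{θ^{n}(x)}), and these limits are uniform in x ∈ X. -/

import Mathlib

noncomputable section

open scoped Matrix RealInnerProductSpace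
open Filter Topology

namespace Paper

abbrev Euc (d : ℕ) : Type := EuclideanSpace ℝ (Fin d)

/-- The action of a `d × d` real matrix on Euclidean space. -/
def act {d : ℕ} (g : Matrix (Fin d) (Fin d) ℝ) (v : Euc d) : Euc d :=
  Matrix.toEuclideanCLM (𝕜 := ℝ) g v

/-- The operator norm of a matrix acting on Euclidean space. -/
def opNorm {d : ℕ} (g : Matrix (Fin d) (Fin d) ℝ) : ℝ :=
  ‖(Matrix.toEuclideanCLM (𝕜 := ℝ) g : Euc d →L[ℝ] Euc d)‖

/-- The underlying matrix of an element of `GL (Fin d) ℝ`. -/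
def mat {d : ℕ} (g : GL (Fin d) ℝ) : Matrix (Fin d) (Fin d) ℝ := ↑g

/-- The `p`-th singular value (`1`-indexed), via the min-max characterization:
`σ_p(g)` is the largest, over `p`-dimensional subspaces `P`, of the minimal
stretch of unit vectors of `P`. -/
def sv {d : ℕ} (g : Matrix (Fin d) (Fin d) ℝ) (p : ℕ) : ℝ :=
  sSup { r | ∃ P : Submodule ℝ (Euc d), Module.finrank ℝ P = p ∧
      r = sInf { t | ∃ v ∈ P, ‖v‖ = 1 ∧ t = ‖act g v‖ } }

/-- `g` has a gap of index `p` if `σ_p(g) > σ_{p+1}(g)`. -/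
def HasGap {d : ℕ} (g : Matrix (Fin d) (Fin d) ℝ) (p : ℕ) : Prop :=
  sv g (p + 1) < sv g p

/-- `U` is a Cartan attractor of index `p` for `g`: for some singular value
decomposition `g = k·a·l` (`k`, `l` orthogonal, `a` diagonal with decreasing
nonnegative entries), `U` is the span of the first `p` columns of `k`. -/
def IsCartanAttractor {d : ℕ} (g : Matrix (Fin d) (Fin d) ℝ) (p : ℕ)
    (U : Submodule ℝ (Euc d)) : Prop :=
  ∃ k l : Matrix (Fin d) (Fin d) ℝ, ∃ σ : Fin d → ℝ,
    k ∈ Matrix.unitaryGroup (Fin d) ℝ ∧ l ∈ Matrix.unitaryGroup (Fin d) ℝ ∧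
    (∀ i j : Fin d, i ≤ j → σ j ≤ σ i) ∧ (∀ i, 0 ≤ σ i) ∧
    g = k * Matrix.diagonal σ * l ∧
    U = Submodule.span ℝ { x : Euc d | ∃ i : Fin d, (i : ℕ) < p ∧
          x = (EuclideanSpace.equiv (Fin d) ℝ).symm (fun j => k j i) }

/-- The Cartan attractor `U_p(g)`; when `g` has a gap of index `p` it is the
unique subspace satisfying `IsCartanAttractor g p`. -/
def cartanAttractor {d : ℕ} (g : Matrix (Fin d) (Fin d) ℝ) (p : ℕ) :
    Submodule ℝ (Euc d) :=
  letI := Classical.propDecidable (∃ U, IsCartanAttractor g p U)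
  if h : ∃ U, IsCartanAttractor g p U then h.choose else ⊥

/-- The angle `∠(P,Q)` between two subspaces: the infimum of angles between
nonzero vectors of `P` and `Q`. -/
def subAngle {d : ℕ} (P Q : Submodule ℝ (Euc d)) : ℝ :=
  sInf { θ | ∃ v ∈ P, v ≠ 0 ∧ ∃ w ∈ Q, w ≠ 0 ∧ θ = InnerProductGeometry.angle v w }

/-- `sin ∠(v,w)`. -/
def sinAngle {d : ℕ} (v w : Euc d) : ℝ := Real.sin (InnerProductGeometry.angle v w)

/-- The distance `d(P,Q) = max_{v ∈ P∖{0}} min_{w ∈ Q∖{0}} sin ∠(v,w)`. -/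
def grassDist {d : ℕ} (P Q : Submodule ℝ (Euc d)) : ℝ :=
  sSup { r | ∃ v ∈ P, v ≠ 0 ∧
      r = sInf { s | ∃ w ∈ Q, w ≠ 0 ∧ s = sinAngle v w } }

/-- The image `g·P` of a subspace under a matrix. -/
def mapMat {d : ℕ} (g : Matrix (Fin d) (Fin d) ℝ) (P : Submodule ℝ (Euc d)) :
    Submodule ℝ (Euc d) :=
  P.map ((Matrix.toEuclideanCLM (𝕜 := ℝ) g : Euc d →L[ℝ] Euc d) : Euc d →ₗ[ℝ] Euc d)

/-- `m(g|_W)`, the minimal stretch of unit vectors of `W` under `g`. -/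
def minRestrict {d : ℕ} (g : Matrix (Fin d) (Fin d) ℝ) (W : Submodule ℝ (Euc d)) : ℝ :=
  sInf { t | ∃ v ∈ W, ‖v‖ = 1 ∧ t = ‖act g v‖ }

/-- `‖g|_W‖`, the maximal stretch of unit vectors of `W` under `g`. -/
def normRestrict {d : ℕ} (g : Matrix (Fin d) (Fin d) ℝ) (W : Submodule ℝ (Euc d)) : ℝ :=
  sSup { t | ∃ v ∈ W, ‖v‖ = 1 ∧ t = ‖act g v‖ }


/-- The cocycle `ψ^n_x = ψ0(θ^{n-1} x) ⋯ ψ0(θ x) · ψ0(x)`. -/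
def cocyc {X : Type*} [TopologicalSpace X] {d : ℕ} (θ : X ≃ₜ X) (ψ0 : X → GL (Fin d) ℝ) :
    ℕ → X → GL (Fin d) ℝ
  | 0, _ => 1
  | n + 1, x => ψ0 ((θ : X → X)^[n] x) * cocyc θ ψ0 n x

/-- A dominated splitting of index `p` for the cocycle over `θ` defined by `ψ0`:
an equivariant decomposition `ℝ^d = E_x ⊕ F_x` with `dim F_x = p` along which
`F` uniformly exponentially dominates `E`. -/
def IsDominatedSplitting {X : Type*} [TopologicalSpace X] {d : ℕ}
    (θ : X ≃ₜ X) (ψ0 : X → GL (Fin d) ℝ) (p : ℕ)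
    (Ef Ff : X → Submodule ℝ (Euc d)) : Prop :=
  (∀ x, Module.finrank ℝ (Ff x) = p) ∧
  (∀ x, IsCompl (Ef x) (Ff x)) ∧
  (∀ x, mapMat (mat (ψ0 x)) (Ef x) = Ef (θ x)) ∧
  (∀ x, mapMat (mat (ψ0 x)) (Ff x) = Ff (θ x)) ∧
  ∃ c > (0 : ℝ), ∃ μ > (0 : ℝ), ∀ x : X, ∀ n : ℕ,
    ∀ u ∈ Ef x, u ≠ 0 → ∀ w ∈ Ff x, w ≠ 0 →
      ‖act (mat (cocyc θ ψ0 n x)) u‖ / ‖u‖ ≤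
        c * Real.exp (-μ * (n : ℝ)) * (‖act (mat (cocyc θ ψ0 n x)) w‖ / ‖w‖)

/-!
Under a uniform gap the subspaces least expanded by `ψ^n_x` move geometrically little when `n`
increases by one, so they converge to an equivariant bundle `E`; the same argument for the reversed
cocycle gives `F`. The point is that `E` and `F` are uniformly transverse. If a vector of `F` is
nearly tangent to `E`, then at every time `n` up to some large `N` the `p`-plane most expanded by
the past `ψ^n` nearly meets the subspace least expanded by the future `ψ^n`, so the maximal dilation
of `p`-volume by `ψ^{2n}` is smaller than the product of the two dilations by an exponential factor.
Multiplying these losses over dyadic scales beats every exponential rate, which is impossible since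
the generator is bounded. Given transversality, `ψ^n` expands `F` at the rate `σ_p` and `E` at the
rate `σ_{p+1}`.

Conversely, domination gives the gap by the minimax principle. It also bounds the angle between `E`
and `F` from below, so a vector expanded by `ψ^n` at most by `σ_{p+1}` has an exponentially small
component along `F`: this identifies `E`, and by time reversal `F`, as limits of Cartan attractors.
-/

section NearlyLE

variable {V W : Type*} [NormedAddCommGroup V] [InnerProductSpace ℝ V]
  [NormedAddCommGroup W] [InnerProductSpace ℝ W]

/-- One-sided gap estimate between subspaces: every vector of `S` lies in `T` up to a relative
error `δ`. For `δ → 0` this is convergence into `T` in the Grassmannian. -/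
def NearlyLE (S T : Submodule ℝ V) (δ : ℝ) : Prop :=
  ∀ v ∈ S, ∃ w ∈ T, ‖v - w‖ ≤ δ * ‖v‖

namespace NearlyLE

variable {S T U : Submodule ℝ V} {δ ε : ℝ}

theorem mono (h : NearlyLE S T δ) (hδε : δ ≤ ε) : NearlyLE S T ε := fun v hv ↦
  let ⟨w, hw, hvw⟩ := h v hv
  ⟨w, hw, hvw.trans (by gcongr)⟩

theorem trans (h : NearlyLE S T δ) (h' : NearlyLE T U ε) (hε : 0 ≤ ε) :
    NearlyLE S U (δ + ε * (1 + δ)) := by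
  intro v hv
  obtain ⟨w, hw, hvw⟩ := h v hv
  obtain ⟨u, hu, hwu⟩ := h' w hw
  have hw_norm : ‖w‖ ≤ (1 + δ) * ‖v‖ := by
    linarith [norm_le_norm_add_norm_sub v w]
  refine ⟨u, hu, ?_⟩
  calc ‖v - u‖ ≤ ‖v - w‖ + ‖w - u‖ := norm_sub_le_norm_sub_add_norm_sub v w u
    _ ≤ δ * ‖v‖ + ε * ((1 + δ) * ‖v‖) := add_le_add hvw (hwu.trans (by gcongr))
    _ = (δ + ε * (1 + δ)) * ‖v‖ := by ring

theorem map {A : V →ₗ[ℝ] W} {K : ℝ} (h : NearlyLE S T δ) (hK : 0 ≤ K) (hδ : 0 ≤ δ)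
    (hA : ∀ v, ‖A v‖ ≤ K * ‖v‖) (hA' : ∀ v, ‖v‖ ≤ K * ‖A v‖) :
    NearlyLE (S.map A) (T.map A) (K * K * δ) := by
  rintro _ ⟨v, hv, rfl⟩
  obtain ⟨w, hw, hvw⟩ := h v hv
  refine ⟨A w, Submodule.mem_map_of_mem hw, ?_⟩
  calc ‖A v - A w‖ = ‖A (v - w)‖ := by rw [map_sub]
    _ ≤ K * (δ * (K * ‖A v‖)) := (hA _).trans (by grw [hvw, hA' v])
    _ = K * K * δ * ‖A v‖ := by ring

variable [FiniteDimensional ℝ V]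

theorem norm_sub_starProjection_le (h : NearlyLE S T δ) {v : V} (hv : v ∈ S) :
    ‖v - T.starProjection v‖ ≤ δ * ‖v‖ := by
  obtain ⟨w, hw, hvw⟩ := h v hv
  rw [Submodule.starProjection_minimal]
  exact (ciInf_le ⟨0, Set.forall_mem_range.2 fun _ ↦ norm_nonneg _⟩ (⟨w, hw⟩ : T)).trans hvw

theorem norm_compl_mul_starProjection_le (h : NearlyLE S T δ) (hδ : 0 ≤ δ) :
    ‖(1 - T.starProjection) * S.starProjection‖ ≤ δ := by
  refine ContinuousLinearMap.opNorm_le_bound _ hδ fun v ↦ ?_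
  exact (h.norm_sub_starProjection_le (S.starProjection_apply_mem v)).trans
    (mul_le_mul_of_nonneg_left (S.norm_starProjection_apply_le v) hδ)

theorem norm_starProjection_sub_le (h : NearlyLE S T δ) (h' : NearlyLE T S δ) (hδ : 0 ≤ δ) :
    ‖S.starProjection - T.starProjection‖ ≤ 2 * δ := by
  have decomposition : S.starProjection - T.starProjection =
      (1 - T.starProjection) * S.starProjection -
        star ((1 - S.starProjection) * T.starProjection) := by
    rw [star_mul, star_sub, star_one, isSelfAdjoint_starProjection S,
      isSelfAdjoint_starProjection T]
    noncomm_ring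
  rw [decomposition, two_mul]
  refine (norm_sub_le _ _).trans (add_le_add (h.norm_compl_mul_starProjection_le hδ) ?_)
  exact (LinearIsometryEquiv.norm_map ContinuousLinearMap.adjoint _).trans_le
    (h'.norm_compl_mul_starProjection_le hδ)

theorem finrank_le (h : NearlyLE S T δ) (hδ : δ < 1) :
    Module.finrank ℝ S ≤ Module.finrank ℝ T := by
  let f : S →ₗ[ℝ] T := (T.orthogonalProjectionOnto : V →ₗ[ℝ] T) ∘ₗ S.subtype
  refine LinearMap.finrank_le_finrank_of_injective (f := f) ?_
  refine LinearMap.ker_eq_bot.1 (LinearMap.ker_eq_bot'.2 fun v hv ↦ ?_)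
  have hproj : T.starProjection (v : V) = 0 := congrArg Subtype.val hv
  have hle := h.norm_sub_starProjection_le v.2
  rw [hproj, sub_zero] at hle
  have hv0 : ‖(v : V)‖ ≤ 0 := by nlinarith [norm_nonneg (v : V)]
  exact Subtype.ext (norm_le_zero_iff.1 hv0)

theorem le_of_tendsto_zero {δ : ℕ → ℝ} (h : ∀ n, NearlyLE S T (δ n))
    (hδ : Tendsto δ atTop (𝓝 0)) : S ≤ T := by
  intro v hv
  have hlim : Tendsto (fun n ↦ δ n * ‖v‖) atTop (𝓝 0) := by
    simpa only [zero_mul] using hδ.mul_const ‖v‖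
  have hzero : ‖v - T.starProjection v‖ ≤ 0 :=
    ge_of_tendsto' hlim fun n ↦ (h n).norm_sub_starProjection_le hv
  exact Submodule.starProjection_eq_self_iff.1 (sub_eq_zero.1 (norm_le_zero_iff.1 hzero)).symm

theorem exists_limit {S : ℕ → Submodule ℝ V} {B r : ℝ} (hB : 0 ≤ B) (hr0 : 0 ≤ r) (hr1 : r < 1)
    (h : ∀ n, NearlyLE (S n) (S (n + 1)) (B * r ^ n))
    (h' : ∀ n, NearlyLE (S (n + 1)) (S n) (B * r ^ n)) :
    ∃ E : Submodule ℝ V, ∀ n, NearlyLE (S n) E (2 * B / (1 - r) * r ^ n) ∧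
      NearlyLE E (S n) (2 * B / (1 - r) * r ^ n) := by
  have hdist n : dist (S n).starProjection (S (n + 1)).starProjection ≤ 2 * B * r ^ n := by
    rw [dist_eq_norm, mul_assoc]
    exact (h n).norm_starProjection_sub_le (h' n) (by positivity)
  obtain ⟨P, hP⟩ := cauchySeq_tendsto_of_complete (cauchySeq_of_le_geometric r _ hr1 hdist)
  have hP_near n v : ‖(S n).starProjection v - P v‖ ≤ 2 * B / (1 - r) * r ^ n * ‖v‖ := by
    have hle := dist_le_of_le_geometric_of_tendsto r _ hr1 hdist hP n
    rw [dist_eq_norm, ← div_mul_eq_mul_div] at hle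
    exact (((S n).starProjection - P).le_opNorm v).trans (by gcongr)
  have hP_idem : P * P = P := by
    refine tendsto_nhds_unique ((hP.mul hP).congr fun n ↦ ?_) hP
    exact (S n).isIdempotentElem_starProjection
  refine ⟨LinearMap.range (P : V →ₗ[ℝ] V), fun n ↦ ⟨fun v hv ↦ ⟨P v, ⟨v, rfl⟩, ?_⟩, ?_⟩⟩
  · simpa only [Submodule.starProjection_eq_self_iff.2 hv] using hP_near n v
  · rintro _ ⟨v, rfl⟩
    refine ⟨_, (S n).starProjection_apply_mem (P v), ?_⟩
    rw [norm_sub_rev]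
    have hPP : P (P v) = P v := congrArg (· v) hP_idem
    exact (hP_near n (P v)).trans_eq' (by rw [hPP]; rfl)

end NearlyLE

end NearlyLE

section OrthonormalBasis

variable {ι V W : Type*} [Fintype ι] [NormedAddCommGroup V] [InnerProductSpace ℝ V]
  [NormedAddCommGroup W] [InnerProductSpace ℝ W]

theorem mem_span_image_iff_inner_eq_zero (b : OrthonormalBasis ι ℝ V) {I : Set ι} {x : V} :
    x ∈ Submodule.span ℝ (b '' I) ↔ ∀ i ∉ I, ⟪b i, x⟫ = 0 := by
  rw [← b.coe_toBasis, Module.Basis.mem_span_image]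
  simp only [Set.subset_def, Finset.mem_coe, Finsupp.mem_support_iff, not_imp_comm,
    b.coe_toBasis_repr_apply, b.repr_apply_apply, b.coe_toBasis]

theorem finrank_span_image (b : OrthonormalBasis ι ℝ V) (I : Set ι) :
    Module.finrank ℝ (Submodule.span ℝ (b '' I)) = I.ncard := by
  classical
  rw [finrank_span_set_eq_card (b.orthonormal.linearIndependent.linearIndepOn_id.mono
    (Set.image_subset_range b I)), ← Set.ncard_eq_toFinset_card',
    Set.ncard_image_of_injective I b.orthonormal.linearIndependent.injective]

theorem norm_le_mul_norm_of_abs_inner_le (b : OrthonormalBasis ι ℝ V)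
    (b' : OrthonormalBasis ι ℝ W) {x : V} {y : W} {r : ℝ} (hr : 0 ≤ r)
    (h : ∀ i, |⟪b i, x⟫| ≤ r * |⟪b' i, y⟫|) : ‖x‖ ≤ r * ‖y‖ := by
  refine le_of_sq_le_sq ?_ (by positivity)
  rw [mul_pow, ← b.sum_sq_norm_inner_right x, ← b'.sum_sq_norm_inner_right y, Finset.mul_sum]
  refine Finset.sum_le_sum fun i _ ↦ ?_
  rw [← mul_pow]
  exact pow_le_pow_left₀ (norm_nonneg _) (h i) 2

theorem ncard_setOf_val_lt {d q : ℕ} (hq : q ≤ d) : {i : Fin d | (i : ℕ) < q}.ncard = q := by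
  rw [Set.ncard_eq_toFinset_card', Set.toFinset_ofPred, Fin.card_filter_val_lt, min_eq_right hq]

theorem ncard_setOf_le_val {d q : ℕ} : {i : Fin d | q ≤ (i : ℕ)}.ncard = d - q := by
  have hcompl : {i : Fin d | q ≤ (i : ℕ)} = {i : Fin d | (i : ℕ) < q}ᶜ := by
    ext i; simp
  rw [hcompl, Set.ncard_compl, Nat.card_fin, Set.ncard_eq_toFinset_card', Set.toFinset_ofPred,
    Fin.card_filter_val_lt]
  omega

end OrthonormalBasis

section SVD

variable {d : ℕ} {V W : Type*} [NormedAddCommGroup V] [InnerProductSpace ℝ V]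
  [NormedAddCommGroup W] [InnerProductSpace ℝ W] {T : V ≃ₗ[ℝ] W}

/-- A singular value decomposition of an isomorphism between `d`-dimensional Euclidean spaces:
orthonormal bases of the source (`right`) and of the target (`left`) in which it is diagonal,
with positive decreasing entries `val`. -/
structure SVD (d : ℕ) (T : V ≃ₗ[ℝ] W) where
  left : OrthonormalBasis (Fin d) ℝ W
  right : OrthonormalBasis (Fin d) ℝ V
  val : Fin d → ℝ
  antitone_val : Antitone val
  val_pos : ∀ i, 0 < val i
  apply_right : ∀ i, T (right i) = val i • left i

section Existence

variable [FiniteDimensional ℝ V] [FiniteDimensional ℝ W]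

theorem exists_orthonormalBasis_inner_map_eq_ite (hd : Module.finrank ℝ V = d) (T : V →ₗ[ℝ] W) :
    ∃ (b : OrthonormalBasis (Fin d) ℝ V) (l : Fin d → ℝ), Antitone l ∧
      ∀ i j, ⟪T (b i), T (b j)⟫ = if i = j then l j else 0 := by
  have hT := (LinearMap.isPositive_adjoint_comp_self T).isSymmetric
  refine ⟨hT.eigenvectorBasis hd, hT.eigenvalues hd, hT.eigenvalues_antitone hd, fun i j ↦ ?_⟩
  have happ : T.adjoint (T (hT.eigenvectorBasis hd j)) =
      hT.eigenvalues hd j • hT.eigenvectorBasis hd j := hT.apply_eigenvectorBasis hd j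
  rw [← LinearMap.adjoint_inner_right, happ, inner_smul_right,
    (hT.eigenvectorBasis hd).inner_eq_ite, mul_ite, mul_one, mul_zero]

theorem SVD.nonempty (hd : Module.finrank ℝ V = d) (T : V ≃ₗ[ℝ] W) : Nonempty (SVD d T) := by
  obtain ⟨b, l, hl, hinner⟩ := exists_orthonormalBasis_inner_map_eq_ite hd T.toLinearMap
  simp only [LinearEquiv.coe_coe] at hinner
  have hl_pos i : 0 < l i := by
    have hii := hinner i i
    rw [if_pos rfl, real_inner_self_eq_norm_sq] at hii
    have hTb : T (b i) ≠ 0 := T.map_ne_zero_iff.2 (b.orthonormal.ne_zero i)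
    rw [← hii]
    positivity
  have hsqrt i : Real.sqrt (l i) ≠ 0 := (Real.sqrt_pos.2 (hl_pos i)).ne'
  let u i := (Real.sqrt (l i))⁻¹ • T (b i)
  have hu : Orthonormal ℝ u := by
    refine orthonormal_iff_ite.2 fun i j ↦ ?_
    rw [real_inner_smul_left, real_inner_smul_right, hinner]
    rcases eq_or_ne i j with rfl | hij
    · rw [if_pos rfl, if_pos rfl]
      field_simp [hsqrt i]
      exact (Real.sq_sqrt (hl_pos i).le).symm
    · simp only [if_neg hij, mul_zero]
  have hspan : Submodule.span ℝ (Set.range u) = ⊤ :=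
    hu.linearIndependent.span_eq_top_of_card_eq_finrank' (by
      rw [Fintype.card_fin, ← T.finrank_eq, hd])
  refine ⟨⟨OrthonormalBasis.mk hu hspan.ge, b, fun i ↦ Real.sqrt (l i),
    fun i j hij ↦ Real.sqrt_le_sqrt (hl hij), fun i ↦ Real.sqrt_pos.2 (hl_pos i), fun i ↦ ?_⟩⟩
  rw [OrthonormalBasis.coe_mk, smul_inv_smul₀ (hsqrt i)]

end Existence

namespace SVD

theorem inner_left_apply (s : SVD d T) (i : Fin d) (x : V) :
    ⟪s.left i, T x⟫ = s.val i * ⟪s.right i, x⟫ := by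
  conv_lhs => rw [← s.right.sum_repr' x]
  simp only [map_sum, map_smul, s.apply_right, inner_sum, inner_smul_right,
    s.left.inner_eq_ite, mul_ite, mul_one, mul_zero, Finset.sum_ite_eq, Finset.mem_univ, if_true]
  exact mul_comm _ _

theorem norm_apply_le_of_mem_span (s : SVD d T) {I : Set (Fin d)} {r : ℝ} (hr : 0 ≤ r)
    (hI : ∀ i ∈ I, s.val i ≤ r) {x : V} (hx : x ∈ Submodule.span ℝ (s.right '' I)) :
    ‖T x‖ ≤ r * ‖x‖ := by
  refine norm_le_mul_norm_of_abs_inner_le s.left s.right hr fun i ↦ ?_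
  rw [s.inner_left_apply, abs_mul, abs_of_pos (s.val_pos i)]
  by_cases hi : i ∈ I
  · exact mul_le_mul_of_nonneg_right (hI i hi) (abs_nonneg _)
  · simp [(mem_span_image_iff_inner_eq_zero s.right).1 hx i hi]

theorem exists_mem_span_norm_sub_le (s : SVD d T) {I : Set (Fin d)} {r : ℝ} (hr : 0 < r)
    (hI : ∀ i ∉ I, r ≤ s.val i) (x : V) :
    ∃ z ∈ Submodule.span ℝ (s.right '' I), r * ‖x - z‖ ≤ ‖T x‖ := by
  have : FiniteDimensional ℝ V := s.right.toBasis.finiteDimensional_of_finite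
  set S := Submodule.span ℝ (s.right '' I)
  have hz := S.starProjection_apply_mem x
  refine ⟨S.starProjection x, hz, ?_⟩
  suffices ‖x - S.starProjection x‖ ≤ r⁻¹ * ‖T x‖ by rwa [le_inv_mul_iff₀ hr] at this
  refine norm_le_mul_norm_of_abs_inner_le s.right s.left (by positivity) fun i ↦ ?_
  by_cases hi : i ∈ I
  · rw [real_inner_comm, Submodule.starProjection_inner_eq_zero x _
      (Submodule.subset_span (Set.mem_image_of_mem s.right hi)), abs_zero]
    positivity
  · rw [inner_sub_right, (mem_span_image_iff_inner_eq_zero s.right).1 hz i hi, sub_zero,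
      s.inner_left_apply, abs_mul, abs_of_pos (s.val_pos i), le_inv_mul_iff₀ hr]
    exact mul_le_mul_of_nonneg_right (hI i hi) (abs_nonneg _)

theorem le_norm_apply_of_mem_span (s : SVD d T) {I : Set (Fin d)} {r : ℝ} (hr : 0 < r)
    (hI : ∀ i ∈ I, r ≤ s.val i) {x : V} (hx : x ∈ Submodule.span ℝ (s.right '' I)) :
    r * ‖x‖ ≤ ‖T x‖ := by
  rw [← le_inv_mul_iff₀ hr]
  refine norm_le_mul_norm_of_abs_inner_le s.right s.left (by positivity) fun i ↦ ?_
  rw [s.inner_left_apply, abs_mul, abs_of_pos (s.val_pos i), le_inv_mul_iff₀ hr]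
  by_cases hi : i ∈ I
  · exact mul_le_mul_of_nonneg_right (hI i hi) (abs_nonneg _)
  · simp [(mem_span_image_iff_inner_eq_zero s.right).1 hx i hi]

/-- The decomposition of the inverse, with the singular vectors in reversed order. -/
def symm (s : SVD d T) : SVD d T.symm where
  left := s.right.reindex Fin.revPerm
  right := s.left.reindex Fin.revPerm
  val i := (s.val i.rev)⁻¹
  antitone_val _ _ hij := inv_anti₀ (s.val_pos _) (s.antitone_val (Fin.rev_le_rev.2 hij))
  val_pos i := inv_pos.2 (s.val_pos _)
  apply_right i := by
    simp only [OrthonormalBasis.reindex_apply, Fin.revPerm_symm, Fin.revPerm_apply]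
    rw [LinearEquiv.symm_apply_eq, map_smul, s.apply_right, inv_smul_smul₀ (s.val_pos _).ne']

theorem symm_left (s : SVD d T) (i : Fin d) : s.symm.left i = s.right i.rev := by
  simp only [symm, OrthonormalBasis.reindex_apply, Fin.revPerm_symm, Fin.revPerm_apply]

theorem symm_right (s : SVD d T) (i : Fin d) : s.symm.right i = s.left i.rev := by
  simp only [symm, OrthonormalBasis.reindex_apply, Fin.revPerm_symm, Fin.revPerm_apply]

theorem symm_val (s : SVD d T) (i : Fin d) : s.symm.val i = (s.val i.rev)⁻¹ := rfl

end SVD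

end SVD

section SingularValues

variable {d p q : ℕ}

/-- The action of invertible matrices on Euclidean space by linear automorphisms: `lin g` is
`act (mat g)` as a linear equivalence. -/
def lin : GL (Fin d) ℝ →* (Euc d ≃ₗ[ℝ] Euc d) :=
  (LinearMap.GeneralLinearGroup.generalLinearEquiv ℝ (Euc d)).toMonoidHom.comp
    (Units.map (Matrix.toLpLinAlgEquiv 2 : Matrix (Fin d) (Fin d) ℝ ≃ₐ[ℝ] _).toAlgHom)

theorem act_mat (g : GL (Fin d) ℝ) (v : Euc d) : act (mat g) v = lin g v := rfl

theorem mapMat_mat (g : GL (Fin d) ℝ) (S : Submodule ℝ (Euc d)) :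
    mapMat (mat g) S = S.map (lin g).toLinearMap := rfl

theorem lin_inv (g : GL (Fin d) ℝ) : lin g⁻¹ = (lin g).symm := rfl

theorem le_sv (g : Matrix (Fin d) (Fin d) ℝ) {P : Submodule ℝ (Euc d)} {r : ℝ} (hq : 1 ≤ q)
    (hP : Module.finrank ℝ P = q) (h : ∀ v ∈ P, r * ‖v‖ ≤ ‖act g v‖) : r ≤ sv g q := by
  have minimum_nonneg (P : Submodule ℝ (Euc d)) :
      BddBelow {t | ∃ v ∈ P, ‖v‖ = 1 ∧ t = ‖act g v‖} :=
    ⟨0, by rintro _ ⟨v, -, -, rfl⟩; exact norm_nonneg _⟩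
  have exists_unit (P : Submodule ℝ (Euc d)) (hP : Module.finrank ℝ P = q) :
      ∃ v ∈ P, ‖v‖ = 1 := by
    have : Nontrivial P := Module.nontrivial_of_finrank_pos (R := ℝ) (by omega)
    obtain ⟨v, hv⟩ := exists_norm_eq P zero_le_one
    exact ⟨v, v.2, hv⟩
  refine le_csSup_of_le ⟨opNorm g, ?_⟩ ⟨P, hP, rfl⟩ ?_
  · rintro _ ⟨P', hP', rfl⟩
    obtain ⟨v, hv, hv1⟩ := exists_unit P' hP'
    refine (csInf_le (minimum_nonneg P') ⟨v, hv, hv1, rfl⟩).trans ?_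
    exact ContinuousLinearMap.unit_le_opNorm _ v hv1.le
  · obtain ⟨v, hv, hv1⟩ := exists_unit P hP
    refine le_csInf ⟨_, v, hv, hv1, rfl⟩ ?_
    rintro _ ⟨w, hw, hw1, rfl⟩
    simpa only [hw1, mul_one] using h w hw

theorem sv_le (g : Matrix (Fin d) (Fin d) ℝ) {Q : Submodule ℝ (Euc d)} {r : ℝ} (hr : 0 ≤ r)
    (hQ : d < q + Module.finrank ℝ Q) (h : ∀ v ∈ Q, ‖act g v‖ ≤ r * ‖v‖) : sv g q ≤ r := by
  refine Real.sSup_le ?_ hr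
  rintro _ ⟨P, hP, rfl⟩
  have hPQ : P ⊓ Q ≠ ⊥ := fun hbot ↦ by
    have hle := Submodule.finrank_add_finrank_le_of_disjoint (disjoint_iff.2 hbot)
    rw [hP, finrank_euclideanSpace_fin] at hle
    omega
  have : Nontrivial (P ⊓ Q : Submodule ℝ (Euc d)) := Submodule.nontrivial_iff_ne_bot.2 hPQ
  obtain ⟨v, hv1⟩ := exists_norm_eq (P ⊓ Q : Submodule ℝ (Euc d)) zero_le_one
  have hv1' : ‖(v : Euc d)‖ = 1 := hv1
  have hbdd : BddBelow {t | ∃ v ∈ P, ‖v‖ = 1 ∧ t = ‖act g v‖} :=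
    ⟨0, by rintro _ ⟨w, -, -, rfl⟩; exact norm_nonneg _⟩
  refine (csInf_le hbdd ⟨v, v.2.1, hv1', rfl⟩).trans ?_
  simpa only [hv1', mul_one] using h v v.2.2

/-- A choice of singular value decomposition of an invertible matrix. -/
def svd (g : GL (Fin d) ℝ) : SVD d (lin g) :=
  (SVD.nonempty finrank_euclideanSpace_fin (lin g)).some

variable {g h : GL (Fin d) ℝ}

namespace SVD

theorem sv_eq (s : SVD d (lin g)) (i : Fin d) : sv (mat g) (i + 1) = s.val i := by
  refine le_antisymm (sv_le _ (s.val_pos i).le ?_ fun v hv ↦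
      s.norm_apply_le_of_mem_span (I := {j | (i : ℕ) ≤ j}) (s.val_pos i).le
        (fun j hj ↦ s.antitone_val hj) hv)
    (le_sv _ (by omega) ?_ fun v hv ↦
      s.le_norm_apply_of_mem_span (I := {j | (j : ℕ) < i + 1}) (s.val_pos i)
        (fun j hj ↦ s.antitone_val (Nat.lt_succ_iff.1 hj)) hv)
  · rw [finrank_span_image, ncard_setOf_le_val]
    omega
  · rw [finrank_span_image, ncard_setOf_val_lt i.2]

theorem val_le_sv (s : SVD d (lin g)) (hq : 1 ≤ q) {i : Fin d} (hi : q ≤ i + 1) :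
    s.val i ≤ sv (mat g) q := by
  obtain ⟨j, rfl⟩ := Nat.exists_eq_add_of_le' hq
  have hj := s.sv_eq ⟨j, by omega⟩
  exact (s.antitone_val (Nat.le_of_succ_le_succ hi)).trans_eq hj.symm

theorem sv_le_val (s : SVD d (lin g)) (hq : 1 ≤ q) (hqd : q ≤ d) {i : Fin d} (hi : i < q) :
    sv (mat g) q ≤ s.val i := by
  obtain ⟨j, rfl⟩ := Nat.exists_eq_add_of_le' hq
  have hj := s.sv_eq ⟨j, by omega⟩
  exact hj.trans_le (s.antitone_val (Nat.le_of_lt_succ hi))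

end SVD

theorem sv_pos (g : GL (Fin d) ℝ) (hq : 1 ≤ q) (hqd : q ≤ d) : 0 < sv (mat g) q :=
  ((svd g).val_pos ⟨q - 1, by omega⟩).trans_le ((svd g).val_le_sv hq (by simp; omega))

theorem sv_inv (g : GL (Fin d) ℝ) {q' : ℕ} (hq : 1 ≤ q) (hq' : 1 ≤ q') (hqq' : q + q' = d + 1) :
    sv (mat g⁻¹) q' = (sv (mat g) q)⁻¹ := by
  obtain ⟨i, rfl⟩ := Nat.exists_eq_add_of_le' hq
  obtain ⟨j, rfl⟩ := Nat.exists_eq_add_of_le' hq'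
  have hg := (svd g).sv_eq ⟨i, by omega⟩
  have hginv := SVD.sv_eq (g := g⁻¹) (svd g).symm ⟨j, by omega⟩
  have hrev : Fin.rev ⟨j, by omega⟩ = (⟨i, by omega⟩ : Fin d) := by
    ext; simp only [Fin.val_rev]; omega
  simp only at hg hginv
  rw [hg, hginv, SVD.symm_val, hrev]

/-- The subspace of codimension `p` least expanded by `g`, spanned by all but the first `p` right
singular vectors. It is canonical when `g` has a gap of index `p`. -/
def slowSpace (g : GL (Fin d) ℝ) (p : ℕ) : Submodule ℝ (Euc d) :=
  Submodule.span ℝ ((svd g).right '' {i | p ≤ (i : ℕ)})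

theorem finrank_slowSpace (g : GL (Fin d) ℝ) (p : ℕ) :
    Module.finrank ℝ (slowSpace g p) = d - p := by
  rw [slowSpace, finrank_span_image, ncard_setOf_le_val]

theorem norm_lin_le_of_mem_slowSpace (hpd : p < d) {v : Euc d} (hv : v ∈ slowSpace g p) :
    ‖lin g v‖ ≤ sv (mat g) (p + 1) * ‖v‖ :=
  (svd g).norm_apply_le_of_mem_span (sv_pos g (by omega) hpd).le
    (fun _ hi ↦ (svd g).val_le_sv (by omega) (Nat.succ_le_succ hi)) hv

theorem exists_mem_slowSpace_sv_mul_norm_sub_le (hp : 1 ≤ p) (hpd : p ≤ d) (g : GL (Fin d) ℝ)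
    (v : Euc d) : ∃ z ∈ slowSpace g p, sv (mat g) p * ‖v - z‖ ≤ ‖lin g v‖ :=
  (svd g).exists_mem_span_norm_sub_le (sv_pos g hp hpd)
    (fun _ hi ↦ (svd g).sv_le_val hp hpd (not_le.1 hi)) v

theorem nearlyLE_slowSpace (hp : 1 ≤ p) (hpd : p ≤ d) {S : Submodule ℝ (Euc d)} {δ : ℝ}
    (hS : ∀ v ∈ S, ‖lin g v‖ ≤ δ * sv (mat g) p * ‖v‖) : NearlyLE S (slowSpace g p) δ := by
  intro v hv
  obtain ⟨z, hz, hvz⟩ := exists_mem_slowSpace_sv_mul_norm_sub_le hp hpd g v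
  refine ⟨z, hz, le_of_mul_le_mul_left (hvz.trans ((hS v hv).trans_eq ?_)) (sv_pos g hp hpd)⟩
  ring

theorem sv_le_mul_sv (hq : 1 ≤ q) (hqd : q ≤ d) {K : ℝ} (hK : 0 ≤ K)
    (hgh : ∀ v, ‖lin g v‖ ≤ K * ‖lin h v‖) : sv (mat g) q ≤ K * sv (mat h) q := by
  obtain ⟨j, rfl⟩ := Nat.exists_eq_add_of_le' hq
  refine sv_le _ (mul_nonneg hK (sv_pos h hq hqd).le) (Q := slowSpace h j) ?_ fun v hv ↦ ?_
  · rw [finrank_slowSpace]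
    omega
  · rw [act_mat, mul_assoc]
    grw [hgh v, norm_lin_le_of_mem_slowSpace hqd hv]

theorem sv_mul_le_mul_sv (hq : 1 ≤ q) (hqd : q ≤ d) {K : ℝ} (hK : 0 ≤ K)
    (hg : ∀ v, ‖lin g v‖ ≤ K * ‖v‖) : sv (mat (h * g)) q ≤ K * sv (mat h) q := by
  obtain ⟨j, rfl⟩ := Nat.exists_eq_add_of_le' hq
  have hh := (sv_pos h hq hqd).le
  refine sv_le _ (mul_nonneg hK hh) (Q := (slowSpace h j).map (lin g).symm.toLinearMap) ?_ ?_
  · rw [LinearEquiv.finrank_map_eq, finrank_slowSpace]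
    omega
  · rintro _ ⟨v, hv, rfl⟩
    have hgv := hg ((lin g).symm v)
    rw [LinearEquiv.apply_symm_apply] at hgv
    rw [act_mat, map_mul, LinearEquiv.mul_apply, LinearEquiv.coe_coe, LinearEquiv.apply_symm_apply,
      mul_comm K, mul_assoc]
    exact (norm_lin_le_of_mem_slowSpace hqd hv).trans (mul_le_mul_of_nonneg_left hgv hh)

end SingularValues

section DecreasingProducts

variable {d p : ℕ} {a : Fin d → ℝ}

theorem val_le_val_of_strictMono {e : Fin p → Fin d} (he : StrictMono e) (k : Fin p) :
    (k : ℕ) ≤ e k := by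
  obtain ⟨k, hk⟩ := k
  induction k with
  | zero => exact Nat.zero_le _
  | succ k ih =>
    have hlt : e ⟨k, by omega⟩ < e ⟨k + 1, hk⟩ := he (Fin.mk_lt_mk.2 k.lt_succ_self)
    exact (ih (by omega)).trans_lt hlt

theorem exists_strictMono_comp_perm {f : Fin p → Fin d} (hf : f.Injective) :
    ∃ τ : Equiv.Perm (Fin p), StrictMono (f ∘ τ) :=
  ⟨Tuple.sort f, (Tuple.monotone_sort f).strictMono_of_injective (hf.comp (Equiv.injective _))⟩

theorem prod_comp_le_prod_castLE (ha : Antitone a) (ha0 : ∀ i, 0 ≤ a i) (hpd : p ≤ d)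
    {f : Fin p → Fin d} (hf : f.Injective) :
    ∏ i, a (f i) ≤ ∏ i, a (Fin.castLE hpd i) := by
  obtain ⟨τ, hτ⟩ := exists_strictMono_comp_perm hf
  rw [← Equiv.prod_comp τ]
  exact Finset.prod_le_prod (fun i _ ↦ ha0 _) fun i _ ↦ ha (val_le_val_of_strictMono hτ i)

theorem prod_comp_le_mul_prod_castLE (ha : Antitone a) (ha0 : ∀ i, 0 ≤ a i) (hpd : p ≤ d)
    {f : Fin p → Fin d} (hf : f.Injective) {γ : ℝ} {k : Fin p} (hk : p ≤ f k)
    (hγ : ∀ i j : Fin d, i < p → p ≤ j → a j ≤ γ * a i) :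
    ∏ i, a (f i) ≤ γ * ∏ i, a (Fin.castLE hpd i) := by
  obtain ⟨τ, hτ⟩ := exists_strictMono_comp_perm hf
  obtain ⟨m, rfl⟩ := Nat.exists_eq_add_of_le' k.pos
  have hlast : m + 1 ≤ f (τ (Fin.last m)) := by
    have hle := hτ.monotone (Fin.le_last (τ.symm k))
    rw [Function.comp_apply, Equiv.apply_symm_apply] at hle
    exact hk.trans hle
  rw [← Equiv.prod_comp τ, Fin.prod_univ_castSucc, Fin.prod_univ_castSucc, mul_left_comm]
  refine mul_le_mul (Finset.prod_le_prod (fun i _ ↦ ha0 _) fun i _ ↦ ?_)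
    (hγ _ _ ?_ hlast) (ha0 _) (Finset.prod_nonneg fun i _ ↦ ha0 _)
  · exact ha (val_le_val_of_strictMono hτ i.castSucc)
  · exact Nat.lt_succ_self m

end DecreasingProducts

section Determinants

variable {ι κ : Type*} [Fintype ι] [DecidableEq ι] [Fintype κ]

theorem det_mul_eq_sum_submatrix (R : Matrix ι κ ℝ) (B : Matrix κ ι ℝ) :
    (R * B).det = ∑ f : ι → κ, (∏ i, R i (f i)) * (B.submatrix f id).det := by
  classical
  have hrows : R * B = fun i ↦ ∑ k, R i k • B k := by
    ext i j
    simp only [Matrix.mul_apply, Finset.sum_apply, Pi.smul_apply, smul_eq_mul]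
  calc (R * B).det = Matrix.detRowAlternating.toMultilinearMap fun i ↦ ∑ k, R i k • B k :=
        congrArg Matrix.det hrows
    _ = ∑ f : ι → κ, (∏ i, R i (f i)) * (B.submatrix f id).det := by
        rw [MultilinearMap.map_sum]
        exact Finset.sum_congr rfl fun f _ ↦ MultilinearMap.map_smul_univ _ _ _

theorem abs_det_mul_le {R : Matrix ι κ ℝ} {B : Matrix κ ι ℝ} {C : ℝ} (hR : ∀ i k, |R i k| ≤ 1)
    (hB : ∀ f : ι → κ, |(B.submatrix f id).det| ≤ C) :
    |(R * B).det| ≤ Fintype.card κ ^ Fintype.card ι * C := by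
  have hterm (f : ι → κ) : |(∏ i, R i (f i)) * (B.submatrix f id).det| ≤ C := by
    rw [abs_mul, Finset.abs_prod]
    refine (mul_le_of_le_one_left (abs_nonneg _) ?_).trans (hB f)
    exact Finset.prod_le_one (fun _ _ ↦ abs_nonneg _) fun i _ ↦ hR i _
  calc |(R * B).det| ≤ ∑ f : ι → κ, |(∏ i, R i (f i)) * (B.submatrix f id).det| := by
        rw [det_mul_eq_sum_submatrix]
        exact Finset.abs_sum_le_sum_abs _ _
    _ ≤ ∑ _f : ι → κ, C := Finset.sum_le_sum fun f _ ↦ hterm f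
    _ = Fintype.card κ ^ Fintype.card ι * C := by
        simp only [Finset.sum_const, Finset.card_univ, Fintype.card_fun, nsmul_eq_mul,
          Nat.cast_pow]

theorem abs_det_mul_mul_le {R : Matrix ι κ ℝ} {N : Matrix κ κ ℝ} {Q : Matrix κ ι ℝ} {C : ℝ}
    (hR : ∀ i k, |R i k| ≤ 1) (hQ : ∀ k i, |Q k i| ≤ 1)
    (hN : ∀ f f' : ι → κ, |(N.submatrix f f').det| ≤ C) :
    |(R * N * Q).det| ≤
      Fintype.card κ ^ Fintype.card ι * (Fintype.card κ ^ Fintype.card ι * C) := by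
  rw [Matrix.mul_assoc]
  refine abs_det_mul_le hR fun f ↦ ?_
  have htranspose : ((N * Q).submatrix f id)ᵀ = Qᵀ * (N.submatrix f id)ᵀ := by
    rw [← Matrix.transpose_mul]; rfl
  rw [← Matrix.det_transpose, htranspose]
  refine abs_det_mul_le (fun i k ↦ hQ k i) fun f' ↦ ?_
  rw [← Matrix.det_transpose]
  exact hN f f'

theorem abs_det_le_factorial {M : Matrix ι ι ℝ} (hM : ∀ i j, |M i j| ≤ 1) :
    |M.det| ≤ (Fintype.card ι).factorial := by
  simpa using Matrix.det_le (abv := AbsoluteValue.abs) hM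

/-- By Cramer's rule `adj M * M = det M`, an almost kernel vector makes `det M` small. -/
theorem abs_det_mul_abs_le {M : Matrix ι ι ℝ} (hM : ∀ i j, |M i j| ≤ 1) {c : ι → ℝ} {η : ℝ}
    (hc : ∀ i, |(M *ᵥ c) i| ≤ η) (j : ι) :
    |M.det| * |c j| ≤ Fintype.card ι * ((Fintype.card ι).factorial * η) := by
  have hadj (i : ι) : |M.adjugate j i| ≤ (Fintype.card ι).factorial := by
    rw [Matrix.adjugate_apply]
    refine abs_det_le_factorial fun k l ↦ ?_
    rw [Matrix.updateRow_apply, Pi.single_apply]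
    split_ifs
    exacts [abs_one.le, abs_zero.trans_le zero_le_one, hM k l]
  have hcramer : M.det * c j = ∑ i, M.adjugate j i * (M *ᵥ c) i := by
    have hmul : M.adjugate *ᵥ (M *ᵥ c) = M.det • c := by
      rw [Matrix.mulVec_mulVec, Matrix.adjugate_mul, Matrix.smul_mulVec, Matrix.one_mulVec]
    exact (congrFun hmul j).symm
  calc |M.det| * |c j| = |∑ i, M.adjugate j i * (M *ᵥ c) i| := by rw [← abs_mul, hcramer]
    _ ≤ ∑ i, |M.adjugate j i| * |(M *ᵥ c) i| := by
        simpa only [abs_mul] using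
          Finset.abs_sum_le_sum_abs (fun i ↦ M.adjugate j i * (M *ᵥ c) i) Finset.univ
    _ ≤ ∑ _i : ι, (Fintype.card ι).factorial * η := Finset.sum_le_sum fun i _ ↦
        mul_le_mul (hadj i) (hc i) (abs_nonneg _) (Nat.cast_nonneg _)
    _ = Fintype.card ι * ((Fintype.card ι).factorial * η) := by
        rw [Finset.sum_const, Finset.card_univ, nsmul_eq_mul]

variable {V : Type*} [NormedAddCommGroup V] [InnerProductSpace ℝ V]

theorem abs_det_inner_le {u v : ι → V} (hu : ∀ i, ‖u i‖ = 1) (hv : ∀ i, ‖v i‖ = 1) {z : V}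
    (hz : z ∈ Submodule.span ℝ (Set.range u)) (hz0 : z ≠ 0) {δ : ℝ}
    (hδ : ∀ i, |⟪v i, z⟫| ≤ δ * ‖z‖) :
    |(Matrix.of fun i j ↦ ⟪v i, u j⟫).det| ≤
      Fintype.card ι ^ 2 * (Fintype.card ι).factorial * δ := by
  obtain ⟨c, rfl⟩ := Submodule.mem_span_range_iff_exists_fun ℝ |>.1 hz
  set M : Matrix ι ι ℝ := Matrix.of fun i j ↦ ⟪v i, u j⟫
  have hM i j : |M i j| ≤ 1 :=
    (abs_real_inner_le_norm _ _).trans_eq (by rw [hv, hu, one_mul])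
  have hMc i : (M *ᵥ c) i = ⟪v i, ∑ j, c j • u j⟫ := by
    simp only [M, Matrix.mulVec, dotProduct, Matrix.of_apply, inner_sum, inner_smul_right,
      mul_comm]
  have hnorm : ‖∑ j, c j • u j‖ ≤ ∑ j, |c j| :=
    (norm_sum_le _ _).trans_eq (Finset.sum_congr rfl fun j _ ↦ by
      rw [norm_smul, hu, mul_one, Real.norm_eq_abs])
  refine le_of_mul_le_mul_right ?_ (norm_pos_iff.2 hz0)
  calc |M.det| * ‖∑ j, c j • u j‖ ≤ ∑ j, |M.det| * |c j| := by
        rw [← Finset.mul_sum]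
        gcongr
    _ ≤ ∑ _j : ι, Fintype.card ι * ((Fintype.card ι).factorial * (δ * ‖∑ j, c j • u j‖)) :=
        Finset.sum_le_sum fun j _ ↦ abs_det_mul_abs_le hM (fun i ↦ by rw [hMc]; exact hδ i) j
    _ = Fintype.card ι ^ 2 * (Fintype.card ι).factorial * δ * ‖∑ j, c j • u j‖ := by
        rw [Finset.sum_const, Finset.card_univ, nsmul_eq_mul]
        ring

end Determinants

section Volume

variable {d p : ℕ} {U V W : Type*} [NormedAddCommGroup U] [InnerProductSpace ℝ U]
  [NormedAddCommGroup V] [InnerProductSpace ℝ V] [NormedAddCommGroup W] [InnerProductSpace ℝ W]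
  {T : U ≃ₗ[ℝ] V} {S : V ≃ₗ[ℝ] W} {R : U ≃ₗ[ℝ] W} {γ δ : ℝ} {z z' : V} {f f' : Fin p → Fin d}

theorem abs_inner_orthonormalBasis_le_one {ι κ : Type*} [Fintype ι] [Fintype κ]
    (b : OrthonormalBasis ι ℝ V) (b' : OrthonormalBasis κ ℝ V) (i : ι) (j : κ) :
    |⟪b i, b' j⟫| ≤ 1 :=
  (abs_real_inner_le_norm _ _).trans_eq (by rw [b.norm_eq_one, b'.norm_eq_one, one_mul])

theorem injective_of_det_comp_ne_zero {κ κ' : Type*} {M : κ → κ' → ℝ} {e : Fin p → κ}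
    {e' : Fin p → κ'} (h : (Matrix.of fun i j ↦ M (e i) (e' j)).det ≠ 0) :
    e.Injective ∧ e'.Injective := by
  refine ⟨fun i j hij ↦ of_not_not fun hne ↦ h (Matrix.det_zero_of_row_eq hne ?_),
    fun i j hij ↦ of_not_not fun hne ↦ h (Matrix.det_zero_of_column_eq hne fun k ↦ ?_)⟩
  · funext k
    rw [Matrix.of_apply, Matrix.of_apply, hij]
  · rw [Matrix.of_apply, Matrix.of_apply, hij]

theorem mem_span_range_comp_of_injective (b : Fin d → V) (hf : f.Injective) (hfp : ∀ i, f i < p)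
    (hz : z ∈ Submodule.span ℝ (b '' {i | (i : ℕ) < p})) :
    z ∈ Submodule.span ℝ (Set.range (b ∘ f)) := by
  refine Submodule.span_mono ?_ hz
  rintro _ ⟨i, hi, rfl⟩
  have hsurj : Function.Surjective fun k ↦ (⟨f k, hfp k⟩ : Fin p) :=
    Finite.surjective_of_injective fun j k hjk ↦ hf (Fin.ext (Fin.mk.inj hjk))
  obtain ⟨k, hk⟩ := hsurj ⟨i, hi⟩
  exact ⟨k, congrArg b (Fin.ext (Fin.mk.inj hk))⟩

theorem abs_det_inner_comp_le (b b' : OrthonormalBasis (Fin d) ℝ V)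
    (hf' : f'.Injective) (hfp : ∀ i, f i < p) (hfp' : ∀ i, f' i < p) (hz0 : z ≠ 0)
    (hz : z ∈ Submodule.span ℝ (b' '' {i | (i : ℕ) < p}))
    (hz' : z' ∈ Submodule.span ℝ (b '' {i | p ≤ (i : ℕ)})) (hzz' : ‖z - z'‖ ≤ δ * ‖z‖) :
    |(Matrix.of fun i j ↦ ⟪b (f i), b' (f' j)⟫).det| ≤ p ^ 2 * p.factorial * δ := by
  have hdet := abs_det_inner_le (u := b' ∘ f') (v := b ∘ f) (fun _ ↦ b'.norm_eq_one _)
    (fun _ ↦ b.norm_eq_one _) (mem_span_range_comp_of_injective _ hf' hfp' hz) hz0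
    (δ := δ) fun i ↦ ?_
  · simpa only [Fintype.card_fin, Function.comp_apply] using hdet
  · have horth : ⟪b (f i), z'⟫ = 0 :=
      (mem_span_image_iff_inner_eq_zero b).1 hz' _ (not_le.2 (hfp i))
    calc |⟪(b ∘ f) i, z⟫| = |⟪b (f i), z - z'⟫| := by
          rw [inner_sub_right, horth, sub_zero, Function.comp_apply]
      _ ≤ ‖z - z'‖ := (abs_real_inner_le_norm _ _).trans_eq (by rw [b.norm_eq_one, one_mul])
      _ ≤ δ * ‖z‖ := hzz'

namespace SVD

theorem diagonal_val_eq_mul_mul {ι : Type*} [DecidableEq ι] (hR : ∀ x, R x = S (T x)) (r : SVD d R)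
    (s : SVD d S) (t : SVD d T) {e : ι → Fin d} (he : e.Injective) :
    Matrix.diagonal (r.val ∘ e) =
      (Matrix.of fun i a ↦ ⟪r.left (e i), s.left a⟫) *
        (Matrix.of fun a b ↦ s.val a * ⟪s.right a, t.left b⟫ * t.val b) *
        (Matrix.of fun b j ↦ ⟪t.right b, r.right (e j)⟫) := by
  have hmiddle a x : ⟪s.left a, S (T x)⟫ =
      ∑ b, s.val a * ⟪s.right a, t.left b⟫ * t.val b * ⟪t.right b, x⟫ := by
    rw [s.inner_left_apply, ← t.left.sum_inner_mul_inner (s.right a), Finset.mul_sum]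
    exact Finset.sum_congr rfl fun b _ ↦ by rw [t.inner_left_apply]; ring
  ext i j
  calc Matrix.diagonal (r.val ∘ e) i j = ⟪r.left (e i), S (T (r.right (e j)))⟫ := by
        rw [← hR, r.inner_left_apply, r.right.inner_eq_ite,
          Matrix.diagonal_apply]
        simp only [he.eq_iff, Function.comp_apply, mul_ite, mul_one, mul_zero]
    _ = ∑ a, ⟪r.left (e i), s.left a⟫ * ⟪s.left a, S (T (r.right (e j)))⟫ :=
        (s.left.sum_inner_mul_inner _ _).symm
    _ = _ := by
        rw [Matrix.mul_assoc]
        simp only [Matrix.mul_apply, Matrix.of_apply, hmiddle]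

theorem det_val_mul_inner_mul_val (s : SVD d S) (t : SVD d T) (f f' : Fin p → Fin d) :
    (Matrix.of fun i j ↦ s.val (f i) * ⟪s.right (f i), t.left (f' j)⟫ * t.val (f' j)).det =
      (∏ i, s.val (f i)) * (Matrix.of fun i j ↦ ⟪s.right (f i), t.left (f' j)⟫).det *
        ∏ i, t.val (f' i) := by
  rw [← Matrix.det_diagonal, ← Matrix.det_diagonal, ← Matrix.det_mul, ← Matrix.det_mul]
  congr 1
  ext i j
  rw [Matrix.mul_diagonal, Matrix.diagonal_mul, Matrix.of_apply, Matrix.of_apply]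

theorem abs_det_val_mul_inner_mul_val_le (s : SVD d S) (t : SVD d T) (hpd : p ≤ d) (hγ : 0 ≤ γ)
    (hs : ∀ i j : Fin d, i < p → p ≤ j → s.val j ≤ γ * s.val i)
    (ht : ∀ i j : Fin d, i < p → p ≤ j → t.val j ≤ γ * t.val i) (hz0 : z ≠ 0)
    (hz : z ∈ Submodule.span ℝ (t.left '' {i | (i : ℕ) < p}))
    (hz' : z' ∈ Submodule.span ℝ (s.right '' {i | p ≤ (i : ℕ)})) (hzz' : ‖z - z'‖ ≤ δ * ‖z‖)
    (f f' : Fin p → Fin d) :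
    |(Matrix.of fun i j ↦ s.val (f i) * ⟪s.right (f i), t.left (f' j)⟫ * t.val (f' j)).det| ≤
      p ^ 2 * p.factorial * (γ + δ) *
        ((∏ i, s.val (Fin.castLE hpd i)) * ∏ i, t.val (Fin.castLE hpd i)) := by
  set D := (Matrix.of fun i j ↦ ⟪s.right (f i), t.left (f' j)⟫).det with hD
  set c : ℝ := p ^ 2 * p.factorial
  have hδ : 0 ≤ δ := nonneg_of_mul_nonneg_left ((norm_nonneg _).trans hzz') (norm_pos_iff.2 hz0)
  have hs0 i : 0 ≤ s.val i := (s.val_pos i).le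
  have ht0 i : 0 ≤ t.val i := (t.val_pos i).le
  have hPs : 0 ≤ ∏ i, s.val (Fin.castLE hpd i) := Finset.prod_nonneg fun _ _ ↦ hs0 _
  have hPt : 0 ≤ ∏ i, t.val (Fin.castLE hpd i) := Finset.prod_nonneg fun _ _ ↦ ht0 _
  have hsf : 0 ≤ ∏ i, s.val (f i) := Finset.prod_nonneg fun _ _ ↦ hs0 _
  have htf : 0 ≤ ∏ i, t.val (f' i) := Finset.prod_nonneg fun _ _ ↦ ht0 _
  rw [det_val_mul_inner_mul_val, ← hD, abs_mul, abs_mul, abs_of_nonneg hsf, abs_of_nonneg htf]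
  rcases eq_or_ne D 0 with hD0 | hD0
  · rw [hD0, abs_zero, mul_zero, zero_mul]
    positivity
  obtain ⟨hf, hf'⟩ := injective_of_det_comp_ne_zero (M := fun a b ↦ ⟪s.right a, t.left b⟫) hD0
  have hDc (k : Fin p) : |D| ≤ c := by
    refine (abs_det_le_factorial fun i j ↦ abs_inner_orthonormalBasis_le_one _ _ _ _).trans ?_
    rw [Fintype.card_fin]
    exact le_mul_of_one_le_left (Nat.cast_nonneg _) (one_le_pow₀ (Nat.one_le_cast.2 k.pos))
  have hsle := prod_comp_le_prod_castLE s.antitone_val hs0 hpd hf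
  have htle := prod_comp_le_prod_castLE t.antitone_val ht0 hpd hf'
  by_cases hfp : ∃ k, p ≤ (f k : ℕ)
  · obtain ⟨k, hk⟩ := hfp
    grw [prod_comp_le_mul_prod_castLE s.antitone_val hs0 hpd hf hk hs, hDc k, htle]
    nlinarith [mul_nonneg (mul_nonneg (by positivity : 0 ≤ c) hδ) (mul_nonneg hPs hPt)]
  by_cases hfp' : ∃ k, p ≤ (f' k : ℕ)
  · obtain ⟨k, hk⟩ := hfp'
    grw [hsle, hDc k, prod_comp_le_mul_prod_castLE t.antitone_val ht0 hpd hf' hk ht]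
    nlinarith [mul_nonneg (mul_nonneg (by positivity : 0 ≤ c) hδ) (mul_nonneg hPs hPt)]
  push Not at hfp hfp'
  grw [hsle, htle, abs_det_inner_comp_le s.right t.left hf' hfp hfp' hz0 hz hz' hzz']
  nlinarith [mul_nonneg (mul_nonneg (by positivity : 0 ≤ c) hγ) (mul_nonneg hPs hPt)]

theorem prod_val_comp_le (hR : ∀ x, R x = S (T x)) (r : SVD d R) (s : SVD d S) (t : SVD d T)
    (hpd : p ≤ d) (hγ : 0 ≤ γ) (hs : ∀ i j : Fin d, i < p → p ≤ j → s.val j ≤ γ * s.val i)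
    (ht : ∀ i j : Fin d, i < p → p ≤ j → t.val j ≤ γ * t.val i) (hz0 : z ≠ 0)
    (hz : z ∈ Submodule.span ℝ (t.left '' {i | (i : ℕ) < p}))
    (hz' : z' ∈ Submodule.span ℝ (s.right '' {i | p ≤ (i : ℕ)})) (hzz' : ‖z - z'‖ ≤ δ * ‖z‖) :
    ∏ i, r.val (Fin.castLE hpd i) ≤ d ^ p * (d ^ p * (p ^ 2 * p.factorial * (γ + δ) *
      ((∏ i, s.val (Fin.castLE hpd i)) * ∏ i, t.val (Fin.castLE hpd i)))) := by
  have hr : ∏ i, r.val (Fin.castLE hpd i) = |(Matrix.diagonal (r.val ∘ Fin.castLE hpd)).det| := by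
    rw [Matrix.det_diagonal]
    exact (abs_of_nonneg (Finset.prod_nonneg fun _ _ ↦ (r.val_pos _).le)).symm
  rw [hr, diagonal_val_eq_mul_mul hR r s t (Fin.castLE_injective hpd)]
  set N : Matrix (Fin d) (Fin d) ℝ :=
    Matrix.of fun a b ↦ s.val a * ⟪s.right a, t.left b⟫ * t.val b
  have hle := abs_det_mul_mul_le (N := N)
    (fun i a ↦ abs_inner_orthonormalBasis_le_one r.left s.left (Fin.castLE hpd i) a)
    (fun b j ↦ abs_inner_orthonormalBasis_le_one t.right r.right b (Fin.castLE hpd j))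
    (abs_det_val_mul_inner_mul_val_le s t hpd hγ hs ht hz0 hz hz' hzz')
  rw [Fintype.card_fin, Fintype.card_fin] at hle
  exact hle

end SVD

section TopVolume

variable {g h : GL (Fin d) ℝ} {K : ℝ} {x y : Euc d}

/-- The product of the `p` largest singular values of `g`: the largest factor by which `g` dilates
the volume of a `p`-dimensional parallelotope, that is, the norm of the `p`-th exterior power. -/
def topVolume (g : GL (Fin d) ℝ) (p : ℕ) : ℝ := ∏ i ∈ Finset.range p, sv (mat g) (i + 1)

theorem topVolume_eq_prod_val (s : SVD d (lin g)) (hpd : p ≤ d) :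
    topVolume g p = ∏ i, s.val (Fin.castLE hpd i) := by
  rw [topVolume, Finset.prod_range]
  exact Finset.prod_congr rfl fun i _ ↦ s.sv_eq (Fin.castLE hpd i)

theorem topVolume_nonneg (g : GL (Fin d) ℝ) (hpd : p ≤ d) : 0 ≤ topVolume g p := by
  rw [topVolume_eq_prod_val (svd g) hpd]
  exact Finset.prod_nonneg fun _ _ ↦ ((svd g).val_pos _).le

theorem topVolume_le_pow (hpd : p ≤ d) (hg : ∀ v, ‖lin g v‖ ≤ K * ‖v‖) :
    topVolume g p ≤ K ^ p := by
  have hval i : (svd g).val i ≤ K := by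
    simpa [(svd g).apply_right, norm_smul, abs_of_pos ((svd g).val_pos i)]
      using hg ((svd g).right i)
  rw [topVolume_eq_prod_val (svd g) hpd]
  calc ∏ i, (svd g).val (Fin.castLE hpd i) ≤ ∏ _i : Fin p, K :=
        Finset.prod_le_prod (fun _ _ ↦ ((svd g).val_pos _).le) fun i _ ↦ hval _
    _ = K ^ p := by rw [Finset.prod_const, Finset.card_univ, Fintype.card_fin]

theorem one_le_pow_mul_topVolume (hpd : p ≤ d) (hg : ∀ v, ‖v‖ ≤ K * ‖lin g v‖) :
    1 ≤ K ^ p * topVolume g p := by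
  have hval i : 1 ≤ K * (svd g).val i := by
    simpa [(svd g).apply_right, norm_smul, abs_of_pos ((svd g).val_pos i)]
      using hg ((svd g).right i)
  calc (1 : ℝ) = ∏ _i : Fin p, 1 := by rw [Finset.prod_const_one]
    _ ≤ ∏ i, K * (svd g).val (Fin.castLE hpd i) :=
        Finset.prod_le_prod (fun _ _ ↦ zero_le_one) fun i _ ↦ hval _
    _ = K ^ p * topVolume g p := by
        rw [topVolume_eq_prod_val (svd g) hpd, Finset.prod_mul_distrib, Finset.prod_const,
          Finset.card_univ, Fintype.card_fin]

theorem slowSpace_inv (g : GL (Fin d) ℝ) (hpd : p ≤ d) :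
    slowSpace g⁻¹ (d - p) =
      Submodule.span ℝ ((svd g⁻¹).symm.left '' {i | (i : ℕ) < p}) := by
  have hleft : (svd g⁻¹).symm.left = (svd g⁻¹).right ∘ Fin.rev := funext (svd g⁻¹).symm_left
  rw [slowSpace, hleft, Set.image_comp]
  congr 2
  ext i
  refine ⟨fun hi ↦ ⟨i.rev, ?_, i.rev_rev⟩, ?_⟩
  · simp only [Set.mem_ofPred_eq, Fin.val_rev] at hi ⊢
    omega
  · rintro ⟨j, hj, rfl⟩
    simp only [Set.mem_ofPred_eq, Fin.val_rev] at hj ⊢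
    omega

theorem SVD.val_le_mul_val_of_sv_le (s : SVD d (lin g)) (hp : 1 ≤ p) (hpd : p ≤ d) (hγ : 0 ≤ γ)
    (hg : sv (mat g) (p + 1) ≤ γ * sv (mat g) p) (i j : Fin d) (hi : i < p) (hj : p ≤ j) :
    s.val j ≤ γ * s.val i :=
  calc s.val j ≤ sv (mat g) (p + 1) := s.val_le_sv (by omega) (Nat.succ_le_succ hj)
    _ ≤ γ * sv (mat g) p := hg
    _ ≤ γ * s.val i := mul_le_mul_of_nonneg_left (s.sv_le_val hp hpd hi) hγ

theorem topVolume_mul_le (hp : 1 ≤ p) (hpd : p ≤ d) (hγ : 0 ≤ γ)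
    (hg : sv (mat g) (p + 1) ≤ γ * sv (mat g) p) (hh : sv (mat h) (p + 1) ≤ γ * sv (mat h) p)
    (hx0 : x ≠ 0) (hx : x ∈ slowSpace g⁻¹ (d - p)) (hy : y ∈ slowSpace h p)
    (hxy : ‖x - y‖ ≤ δ * ‖x‖) :
    topVolume (h * g) p ≤
      d ^ p * (d ^ p * (p ^ 2 * p.factorial * (γ + δ) * (topVolume h p * topVolume g p))) := by
  let t : SVD d (lin g) := (svd g⁻¹).symm
  rw [topVolume_eq_prod_val (svd (h * g)) hpd, topVolume_eq_prod_val (svd h) hpd,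
    topVolume_eq_prod_val t hpd]
  rw [slowSpace_inv g hpd] at hx
  exact SVD.prod_val_comp_le (fun v ↦ by rw [map_mul]; rfl) (svd (h * g)) (svd h) t hpd hγ
    ((svd h).val_le_mul_val_of_sv_le hp hpd hγ hh) (t.val_le_mul_val_of_sv_le hp hpd hγ hg)
    hx0 hx hy hxy

end TopVolume

end Volume

section BoundedGenerator

variable {X : Type*} {d : ℕ} {ψ0 : X → GL (Fin d) ℝ} {K : ℝ}

/-- A family of matrices which, together with their inverses, have norm at most `K`. -/
structure IsBoundedGenerator (ψ0 : X → GL (Fin d) ℝ) (K : ℝ) : Prop where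
  one_le : 1 ≤ K
  norm_lin_le : ∀ x v, ‖lin (ψ0 x) v‖ ≤ K * ‖v‖
  norm_le : ∀ x v, ‖v‖ ≤ K * ‖lin (ψ0 x) v‖

theorem isBoundedGenerator_of_opNorm_le (h : ∀ x, opNorm (mat (ψ0 x)) ≤ K)
    (h' : ∀ x, opNorm (mat (ψ0 x)⁻¹) ≤ K) : IsBoundedGenerator ψ0 (max 1 K) := by
  have bound (g : GL (Fin d) ℝ) (hg : opNorm (mat g) ≤ K) (v : Euc d) :
      ‖lin g v‖ ≤ max 1 K * ‖v‖ :=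
    ContinuousLinearMap.le_of_opNorm_le _ (hg.trans (le_max_right _ _)) v
  refine ⟨le_max_left _ _, fun x ↦ bound _ (h x), fun x v ↦ ?_⟩
  simpa only [lin_inv, LinearEquiv.symm_apply_apply] using bound _ (h' x) (lin (ψ0 x) v)

theorem exists_opNorm_le [TopologicalSpace X] [CompactSpace X] (hψ : Continuous ψ0) :
    ∃ K, ∀ x, opNorm (mat (ψ0 x)) ≤ K := by
  have hcont : Continuous fun x ↦ opNorm (mat (ψ0 x)) :=
    ((LinearMap.continuous_of_finiteDimensional
      (Matrix.toEuclideanCLM (n := Fin d) (𝕜 := ℝ)).toAlgEquiv.toLinearMap).comp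
      (Units.continuous_val.comp hψ)).norm
  obtain ⟨K, hK⟩ := (isCompact_range hcont).bddAbove
  exact ⟨K, fun x ↦ hK ⟨x, rfl⟩⟩

end BoundedGenerator

section Cocycle

variable {X : Type*} [TopologicalSpace X] {d p : ℕ} {θ : X ≃ₜ X} {ψ0 : X → GL (Fin d) ℝ}
  {E F : X → Submodule ℝ (Euc d)} {K c r : ℝ}

theorem cocyc_one (θ : X ≃ₜ X) (ψ0 : X → GL (Fin d) ℝ) (x : X) : cocyc θ ψ0 1 x = ψ0 x :=
  mul_one _

theorem cocyc_add (θ : X ≃ₜ X) (ψ0 : X → GL (Fin d) ℝ) (m n : ℕ) (x : X) :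
    cocyc θ ψ0 (m + n) x = cocyc θ ψ0 m (θ^[n] x) * cocyc θ ψ0 n x := by
  induction m with
  | zero => rw [Nat.zero_add, cocyc, one_mul]
  | succ m ih => rw [Nat.succ_add, cocyc, cocyc, ih, Function.iterate_add_apply, mul_assoc]

theorem symm_iterate_iterate (θ : X ≃ₜ X) (n : ℕ) (x : X) : θ.symm^[n] (θ^[n] x) = x :=
  Function.LeftInverse.iterate θ.symm_apply_apply n x

theorem iterate_symm_iterate (θ : X ≃ₜ X) (n : ℕ) (x : X) : θ^[n] (θ.symm^[n] x) = x :=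
  Function.LeftInverse.iterate θ.apply_symm_apply n x

/-- The generator of the time-reversed cocycle: over `θ⁻¹` it generates `ψ^{-n}`. -/
def revGen (θ : X ≃ₜ X) (ψ0 : X → GL (Fin d) ℝ) (x : X) : GL (Fin d) ℝ := (ψ0 (θ.symm x))⁻¹

theorem revGen_revGen (θ : X ≃ₜ X) (ψ0 : X → GL (Fin d) ℝ) :
    revGen θ.symm (revGen θ ψ0) = ψ0 := by
  funext x
  simp only [revGen, Homeomorph.symm_symm, Homeomorph.symm_apply_apply, inv_inv]

theorem cocyc_revGen_iterate (θ : X ≃ₜ X) (ψ0 : X → GL (Fin d) ℝ) (n : ℕ) (x : X) :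
    cocyc θ.symm (revGen θ ψ0) n (θ^[n] x) = (cocyc θ ψ0 n x)⁻¹ := by
  induction n generalizing x with
  | zero => exact inv_one.symm
  | succ n ih =>
    rw [cocyc, Function.iterate_succ_apply, symm_iterate_iterate, ih, revGen,
      Homeomorph.symm_apply_apply, cocyc_add, mul_inv_rev, Function.iterate_one, cocyc_one]

theorem cocyc_revGen (θ : X ≃ₜ X) (ψ0 : X → GL (Fin d) ℝ) (n : ℕ) (x : X) :
    cocyc θ.symm (revGen θ ψ0) n x = (cocyc θ ψ0 n (θ.symm^[n] x))⁻¹ := by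
  rw [← cocyc_revGen_iterate, iterate_symm_iterate]

namespace IsBoundedGenerator

theorem revGen (hK : IsBoundedGenerator ψ0 K) (θ : X ≃ₜ X) :
    IsBoundedGenerator (revGen θ ψ0) K where
  one_le := hK.one_le
  norm_lin_le x v := by
    simpa only [Paper.revGen, lin_inv, LinearEquiv.apply_symm_apply] using
      hK.norm_le (θ.symm x) ((lin (ψ0 (θ.symm x))).symm v)
  norm_le x v := by
    simpa only [Paper.revGen, lin_inv, LinearEquiv.apply_symm_apply] using
      hK.norm_lin_le (θ.symm x) ((lin (ψ0 (θ.symm x))).symm v)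

theorem norm_lin_cocyc_le (hK : IsBoundedGenerator ψ0 K) (θ : X ≃ₜ X) (n : ℕ) (x : X)
    (v : Euc d) : ‖lin (cocyc θ ψ0 n x) v‖ ≤ K ^ n * ‖v‖ := by
  have hK0 := zero_le_one.trans hK.one_le
  induction n with
  | zero => rw [cocyc, map_one, pow_zero, one_mul]; rfl
  | succ n ih =>
    rw [cocyc, map_mul, LinearEquiv.mul_apply, pow_succ', mul_assoc]
    exact (hK.norm_lin_le _ _).trans (mul_le_mul_of_nonneg_left ih hK0)

theorem norm_le_lin_cocyc (hK : IsBoundedGenerator ψ0 K) (θ : X ≃ₜ X) (n : ℕ) (x : X)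
    (v : Euc d) : ‖v‖ ≤ K ^ n * ‖lin (cocyc θ ψ0 n x) v‖ := by
  simpa only [cocyc_revGen_iterate, lin_inv, LinearEquiv.symm_apply_apply] using
    (hK.revGen θ).norm_lin_cocyc_le θ.symm n (θ^[n] x) (lin (cocyc θ ψ0 n x) v)

end IsBoundedGenerator

/-- The field of subspaces `E` is invariant under the cocycle. -/
def IsEquivariant (θ : X ≃ₜ X) (ψ0 : X → GL (Fin d) ℝ) (E : X → Submodule ℝ (Euc d)) : Prop :=
  ∀ x, mapMat (mat (ψ0 x)) (E x) = E (θ x)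

namespace IsEquivariant

theorem lin_cocyc_mem (hE : IsEquivariant θ ψ0 E) (n : ℕ) {x : X} {v : Euc d} (hv : v ∈ E x) :
    lin (cocyc θ ψ0 n x) v ∈ E (θ^[n] x) := by
  induction n with
  | zero => rwa [cocyc, map_one]
  | succ n ih =>
    rw [cocyc, map_mul, LinearEquiv.mul_apply, Function.iterate_succ_apply', ← hE]
    exact Submodule.mem_map_of_mem ih

theorem revGen (hE : IsEquivariant θ ψ0 E) : IsEquivariant θ.symm (revGen θ ψ0) E := by
  intro x
  have hx := hE (θ.symm x)
  rw [Homeomorph.apply_symm_apply, mapMat_mat] at hx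
  rw [mapMat_mat, Paper.revGen, lin_inv, ← hx, ← Submodule.map_comp,
    LinearEquiv.symm_comp, Submodule.map_id]

theorem exists_lin_cocyc_eq (hE : IsEquivariant θ ψ0 E) (n : ℕ) {x : X} {v : Euc d}
    (hv : v ∈ E x) : ∃ u ∈ E (θ.symm^[n] x), lin (cocyc θ ψ0 n (θ.symm^[n] x)) u = v := by
  refine ⟨_, hE.revGen.lin_cocyc_mem n hv, ?_⟩
  rw [cocyc_revGen, lin_inv, LinearEquiv.apply_symm_apply]

end IsEquivariant

/-- The quotient `σ_{p+1}/σ_p` of the singular values of `ψ^n` is at most `c r^n`. -/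
def HasUniformGap (θ : X ≃ₜ X) (ψ0 : X → GL (Fin d) ℝ) (p : ℕ) (c r : ℝ) : Prop :=
  ∀ n x, sv (mat (cocyc θ ψ0 n x)) (p + 1) ≤ c * r ^ n * sv (mat (cocyc θ ψ0 n x)) p

theorem exp_neg_mul_natCast (μ : ℝ) (n : ℕ) : Real.exp (-μ * n) = Real.exp (-μ) ^ n := by
  rw [mul_comm, Real.exp_nat_mul]

theorem hasUniformGap_exp_iff (hp : 1 ≤ p) (hpd : p ≤ d) {μ : ℝ} :
    HasUniformGap θ ψ0 p c (Real.exp (-μ)) ↔ ∀ x (n : ℕ),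
      sv (mat (cocyc θ ψ0 n x)) (p + 1) / sv (mat (cocyc θ ψ0 n x)) p ≤
        c * Real.exp (-μ * n) := by
  simp only [div_le_iff₀ (sv_pos _ hp hpd), exp_neg_mul_natCast]
  exact forall_comm

theorem HasUniformGap.revGen (h : HasUniformGap θ ψ0 p c r) (hp : 1 ≤ p) (hpd : p < d) :
    HasUniformGap θ.symm (revGen θ ψ0) (d - p) c r := by
  intro n x
  rw [cocyc_revGen, sv_inv (q := p) _ hp (by omega) (by omega),
    sv_inv (q := p + 1) _ (by omega) (by omega) (by omega), ← div_eq_mul_inv,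
    le_div_iff₀ (sv_pos _ (by omega) hpd), inv_mul_le_iff₀ (sv_pos _ hp hpd.le), mul_comm]
  exact h n (θ.symm^[n] x)

/-- `F` dominates `E` with rate `r`: the growth of `ψ^n` on `E` relative to that on `F` is at most
`c r^n`. -/
def Dominates (θ : X ≃ₜ X) (ψ0 : X → GL (Fin d) ℝ) (E F : X → Submodule ℝ (Euc d)) (c r : ℝ) :
    Prop :=
  ∀ n x, ∀ u ∈ E x, ∀ w ∈ F x, ‖lin (cocyc θ ψ0 n x) u‖ * ‖w‖ ≤
    c * r ^ n * (‖lin (cocyc θ ψ0 n x) w‖ * ‖u‖)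

theorem Dominates.revGen (h : Dominates θ ψ0 E F c r) (hE : IsEquivariant θ ψ0 E)
    (hF : IsEquivariant θ ψ0 F) : Dominates θ.symm (revGen θ ψ0) F E c r := by
  intro n x w hw u hu
  obtain ⟨w', hw', rfl⟩ := hF.exists_lin_cocyc_eq n hw
  obtain ⟨u', hu', rfl⟩ := hE.exists_lin_cocyc_eq n hu
  simp only [cocyc_revGen, lin_inv, LinearEquiv.symm_apply_apply]
  simpa only [mul_comm] using h n _ u' hu' w' hw'

theorem isDominatedSplitting_iff : IsDominatedSplitting θ ψ0 p E F ↔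
    (∀ x, Module.finrank ℝ (F x) = p) ∧ (∀ x, IsCompl (E x) (F x)) ∧ IsEquivariant θ ψ0 E ∧
      IsEquivariant θ ψ0 F ∧ ∃ c > 0, ∃ μ > 0, Dominates θ ψ0 E F c (Real.exp (-μ)) := by
  have hdiv {u w : Euc d} (hu : u ≠ 0) (hw : w ≠ 0) (a b q : ℝ) :
      a / ‖u‖ ≤ q * (b / ‖w‖) ↔ a * ‖w‖ ≤ q * (b * ‖u‖) := by
    rw [← mul_div_assoc, div_le_div_iff₀ (norm_pos_iff.2 hu) (norm_pos_iff.2 hw), mul_assoc q]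
  refine and_congr_right fun _ ↦ and_congr_right fun _ ↦ and_congr_right fun _ ↦
    and_congr_right fun _ ↦ exists_congr fun c ↦ and_congr_right fun _ ↦ exists_congr fun μ ↦
    and_congr_right fun _ ↦ ⟨fun h n x u hu w hw ↦ ?_, fun h x n u hu hu0 w hw hw0 ↦ ?_⟩
  · rcases eq_or_ne u 0 with rfl | hu0
    · simp
    rcases eq_or_ne w 0 with rfl | hw0
    · simp
    simpa only [exp_neg_mul_natCast, act_mat, hdiv hu0 hw0] using h x n u hu hu0 w hw hw0
  · simpa only [exp_neg_mul_natCast, act_mat, hdiv hu0 hw0] using h n x u hu w hw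

end Cocycle

section StableBundle

variable {d p : ℕ} {K γ : ℝ} {a g : GL (Fin d) ℝ}

theorem nearlyLE_slowSpace_mul_left (hp : 1 ≤ p) (hpd : p < d) (hK : 0 ≤ K) (hγ : 0 ≤ γ)
    (ha : ∀ v, ‖lin a v‖ ≤ K * ‖v‖) (ha' : ∀ v, ‖v‖ ≤ K * ‖lin a v‖)
    (hg : sv (mat g) (p + 1) ≤ γ * sv (mat g) p) :
    NearlyLE (slowSpace g p) (slowSpace (a * g) p) (K * K * γ) := by
  refine nearlyLE_slowSpace hp hpd.le fun v hv ↦ ?_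
  have hsv : sv (mat g) p ≤ K * sv (mat (a * g)) p :=
    sv_le_mul_sv hp hpd.le hK fun w ↦ by
      rw [map_mul, LinearEquiv.mul_apply]
      exact ha' _
  rw [map_mul, LinearEquiv.mul_apply]
  calc ‖lin a (lin g v)‖ ≤ K * (γ * (K * sv (mat (a * g)) p) * ‖v‖) := by
        grw [ha, norm_lin_le_of_mem_slowSpace hpd hv, hg, hsv]
    _ = K * K * γ * sv (mat (a * g)) p * ‖v‖ := by ring

theorem nearlyLE_map_slowSpace_mul_right (hp : 1 ≤ p) (hpd : p < d) (hK : 0 ≤ K) (hγ : 0 ≤ γ)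
    (ha : ∀ v, ‖lin a v‖ ≤ K * ‖v‖) (ha' : ∀ v, ‖v‖ ≤ K * ‖lin a v‖)
    (hg : sv (mat (g * a)) (p + 1) ≤ γ * sv (mat (g * a)) p) :
    NearlyLE ((slowSpace (g * a) p).map (lin a).toLinearMap) (slowSpace g p) (K * K * γ) := by
  refine nearlyLE_slowSpace hp hpd.le ?_
  rintro _ ⟨v, hv, rfl⟩
  have hpos := sv_pos g hp hpd.le
  rw [LinearEquiv.coe_coe, ← LinearEquiv.mul_apply, ← map_mul]
  calc ‖lin (g * a) v‖ ≤ γ * (K * sv (mat g) p) * (K * ‖lin a v‖) := by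
        grw [norm_lin_le_of_mem_slowSpace hpd hv, hg, sv_mul_le_mul_sv hp hpd.le hK ha, ← ha' v]
    _ = K * K * γ * sv (mat g) p * ‖lin a v‖ := by ring

variable {X : Type*} [TopologicalSpace X] {θ : X ≃ₜ X} {ψ0 : X → GL (Fin d) ℝ} {c r C : ℝ}
  {E : X → Submodule ℝ (Euc d)}

/-- `E` is an equivariant bundle of codimension `p` to which the subspaces least expanded by `ψ^n`
converge uniformly, with error `C r^n`. -/
structure IsStableBundle (θ : X ≃ₜ X) (ψ0 : X → GL (Fin d) ℝ) (p : ℕ)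
    (E : X → Submodule ℝ (Euc d)) (C r : ℝ) : Prop where
  nonneg : 0 ≤ C
  finrank_eq : ∀ x, Module.finrank ℝ (E x) = d - p
  equivariant : IsEquivariant θ ψ0 E
  slowSpace_nearlyLE : ∀ n x, NearlyLE (slowSpace (cocyc θ ψ0 n x) p) (E x) (C * r ^ n)
  nearlyLE_slowSpace : ∀ n x, NearlyLE (E x) (slowSpace (cocyc θ ψ0 n x) p) (C * r ^ n)

theorem tendsto_const_mul_pow (hr0 : 0 ≤ r) (hr1 : r < 1) (C : ℝ) :
    Tendsto (fun n : ℕ ↦ C * r ^ n) atTop (𝓝 0) := by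
  simpa only [mul_zero] using (tendsto_pow_atTop_nhds_zero_of_lt_one hr0 hr1).const_mul C

namespace HasUniformGap

theorem slowSpace_nearlyLE_succ (hgap : HasUniformGap θ ψ0 p c r) (hK : IsBoundedGenerator ψ0 K)
    (hp : 1 ≤ p) (hpd : p < d) (hc : 0 ≤ c) (hr0 : 0 ≤ r) (n : ℕ) (x : X) :
    NearlyLE (slowSpace (cocyc θ ψ0 n x) p) (slowSpace (cocyc θ ψ0 (n + 1) x) p)
      (K * K * (c * r ^ n)) :=
  nearlyLE_slowSpace_mul_left hp hpd (zero_le_one.trans hK.one_le) (by positivity)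
    (hK.norm_lin_le _) (hK.norm_le _) (hgap n x)

theorem slowSpace_succ_nearlyLE (hgap : HasUniformGap θ ψ0 p c r) (hK : IsBoundedGenerator ψ0 K)
    (hp : 1 ≤ p) (hpd : p < d) (hc : 0 ≤ c) (hr0 : 0 ≤ r) (hr1 : r ≤ 1) (n : ℕ) (x : X) :
    NearlyLE (slowSpace (cocyc θ ψ0 (n + 1) x) p) (slowSpace (cocyc θ ψ0 n x) p)
      (K * K * (c * r ^ n)) := by
  have hK0 := zero_le_one.trans hK.one_le
  have hinv := hK.revGen θ
  have hnear := nearlyLE_slowSpace_mul_left hp hpd hK0 (by positivity)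
    (hinv.norm_lin_le (θ^[n + 1] x)) (hinv.norm_le (θ^[n + 1] x)) (hgap (n + 1) x)
  rw [Paper.revGen, Function.iterate_succ_apply', Homeomorph.symm_apply_apply, cocyc,
    inv_mul_cancel_left] at hnear
  exact hnear.mono (by gcongr 2; exact pow_le_pow_of_le_one hr0 hr1 n.le_succ)

theorem map_slowSpace_succ_nearlyLE (hgap : HasUniformGap θ ψ0 p c r)
    (hK : IsBoundedGenerator ψ0 K) (hp : 1 ≤ p) (hpd : p < d) (hc : 0 ≤ c) (hr0 : 0 ≤ r)
    (n : ℕ) (x : X) :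
    NearlyLE ((slowSpace (cocyc θ ψ0 (n + 1) x) p).map (lin (ψ0 x)).toLinearMap)
      (slowSpace (cocyc θ ψ0 n (θ x)) p) (K * K * (c * r ^ (n + 1))) := by
  have hsucc : cocyc θ ψ0 (n + 1) x = cocyc θ ψ0 n (θ x) * ψ0 x := by
    rw [cocyc_add, cocyc_one, Function.iterate_one]
  have hn := hgap (n + 1) x
  rw [hsucc] at hn ⊢
  exact nearlyLE_map_slowSpace_mul_right hp hpd (zero_le_one.trans hK.one_le) (by positivity)
    (hK.norm_lin_le x) (hK.norm_le x) hn

theorem isEquivariant_of_nearlyLE (hgap : HasUniformGap θ ψ0 p c r) (hK : IsBoundedGenerator ψ0 K)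
    (hp : 1 ≤ p) (hpd : p < d) (hc : 0 ≤ c) (hC : 0 ≤ C) (hr0 : 0 ≤ r) (hr1 : r < 1)
    (hfin : ∀ x, Module.finrank ℝ (E x) = d - p)
    (hSE : ∀ n x, NearlyLE (slowSpace (cocyc θ ψ0 n x) p) (E x) (C * r ^ n))
    (hES : ∀ n x, NearlyLE (E x) (slowSpace (cocyc θ ψ0 n x) p) (C * r ^ n)) :
    IsEquivariant θ ψ0 E := by
  intro x
  have hK0 := zero_le_one.trans hK.one_le
  have hnear n := (((hES (n + 1) x).map (A := (lin (ψ0 x)).toLinearMap) hK0 (by positivity)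
    (hK.norm_lin_le x) (hK.norm_le x)).trans
    (hgap.map_slowSpace_succ_nearlyLE hK hp hpd hc hr0 n x) (by positivity)).trans
    (hSE n (θ x)) (by positivity)
  refine Submodule.eq_of_le_of_finrank_eq (NearlyLE.le_of_tendsto_zero hnear ?_) ?_
  · have hzero := tendsto_const_mul_pow hr0 hr1
    have hmap := ((hzero C).comp (tendsto_add_atTop_nat 1)).const_mul (K * K)
    have hstep := ((hzero c).comp (tendsto_add_atTop_nat 1)).const_mul (K * K)
    have hsum := hmap.add (hstep.mul (hmap.const_add 1))
    simpa using hsum.add ((hzero C).mul (hsum.const_add 1))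
  · rw [mapMat_mat, LinearEquiv.finrank_map_eq, hfin, hfin]

theorem exists_isStableBundle (hgap : HasUniformGap θ ψ0 p c r) (hK : IsBoundedGenerator ψ0 K)
    (hp : 1 ≤ p) (hpd : p < d) (hc : 0 ≤ c) (hr0 : 0 ≤ r) (hr1 : r < 1) :
    ∃ E, IsStableBundle θ ψ0 p E (2 * (K * K * c) / (1 - r)) r := by
  have hK0 := zero_le_one.trans hK.one_le
  have hlim x := NearlyLE.exists_limit (B := K * K * c) (by positivity) hr0 hr1
    (fun n ↦ (hgap.slowSpace_nearlyLE_succ hK hp hpd hc hr0 n x).mono (mul_assoc _ _ _).ge)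
    (fun n ↦ (hgap.slowSpace_succ_nearlyLE hK hp hpd hc hr0 hr1.le n x).mono (mul_assoc _ _ _).ge)
  choose E hE using hlim
  set C := 2 * (K * K * c) / (1 - r)
  have hC : 0 ≤ C := div_nonneg (by positivity) (by linarith)
  have hfin x : Module.finrank ℝ (E x) = d - p := by
    obtain ⟨n, hn⟩ := ((tendsto_const_mul_pow hr0 hr1 C).eventually_lt_const one_pos).exists
    rw [← finrank_slowSpace (cocyc θ ψ0 n x) p]
    exact le_antisymm ((hE x n).2.finrank_le hn) ((hE x n).1.finrank_le hn)
  exact ⟨E, hC, hfin, hgap.isEquivariant_of_nearlyLE hK hp hpd hc hC hr0 hr1 hfin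
    (fun n x ↦ (hE x n).1) (fun n x ↦ (hE x n).2), fun n x ↦ (hE x n).1, fun n x ↦ (hE x n).2⟩

end HasUniformGap

end StableBundle

theorem NearlyLE.exists_norm_sub_le {V : Type*} [NormedAddCommGroup V] [InnerProductSpace ℝ V]
    {S T S' T' : Submodule ℝ V} {q δ : ℝ} (h : NearlyLE S S' q) (h' : NearlyLE T T' q)
    (hS' : S' ≠ ⊥) (hδ0 : 0 ≤ δ) (hδ1 : δ ≤ 1) {u v : V} (hu : u ∈ S) (hv : v ∈ T)
    (hu0 : u ≠ 0) (huv : ‖u - v‖ ≤ δ * ‖u‖) :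
    ∃ x ∈ S', ∃ y ∈ T', x ≠ 0 ∧ ‖x - y‖ ≤ (6 * q + 2 * δ) * ‖x‖ := by
  rcases le_total q (1 / 2) with hq | hq
  · obtain ⟨x, hx, hux⟩ := h u hu
    obtain ⟨y, hy, hvy⟩ := h' v hv
    have hu_pos : 0 < ‖u‖ := norm_pos_iff.2 hu0
    have hq0 : 0 ≤ q := nonneg_of_mul_nonneg_left ((norm_nonneg _).trans hux) hu_pos
    have hv_norm : ‖v‖ ≤ 2 * ‖u‖ := by
      have := norm_le_norm_add_norm_sub u v
      nlinarith
    have hu_norm : ‖u‖ ≤ 2 * ‖x‖ := by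
      have := norm_le_norm_add_norm_sub x u
      rw [norm_sub_rev] at this
      nlinarith
    refine ⟨x, hx, y, hy, norm_pos_iff.1 (by linarith), ?_⟩
    calc ‖x - y‖ = ‖-(u - x) + (u - v) + (v - y)‖ := by congr 1; abel
      _ ≤ ‖u - x‖ + ‖u - v‖ + ‖v - y‖ := by
        simpa only [norm_neg] using norm_add₃_le (a := -(u - x)) (b := u - v) (c := v - y)
      _ ≤ q * ‖u‖ + δ * ‖u‖ + q * (2 * ‖u‖) := by grw [hux, huv, hvy, hv_norm]
      _ = (3 * q + δ) * ‖u‖ := by ring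
      _ ≤ (3 * q + δ) * (2 * ‖x‖) := by gcongr
      _ = (6 * q + 2 * δ) * ‖x‖ := by ring
  · obtain ⟨x, hx, hx0⟩ := S'.ne_bot_iff.1 hS'
    refine ⟨x, hx, 0, T'.zero_mem, hx0, ?_⟩
    rw [sub_zero]
    exact le_mul_of_one_le_left (norm_nonneg x) (by linarith)

section Transversality

/-- Iterating the quasi-multiplicative bound `a (j + 1) ≤ M r^(2^j) a j * a j` gains the factor
`r^(j/2)` per unit of time `2^j`: each doubling improves the exponential rate. -/
theorem sq_mul_le_pow_two_pow {M B r : ℝ} (hM : 0 ≤ M) (k : ℕ) {a : ℕ → ℕ → ℝ}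
    (ha : ∀ j i, 0 ≤ a j i) (hB : ∀ i, a 0 i ≤ B)
    (hstep : ∀ j i, i + 2 ^ (j + 1) ≤ 2 ^ k →
      a (j + 1) i ≤ M * r ^ 2 ^ j * (a j (i + 2 ^ j) * a j i)) (j : ℕ) :
    ∀ i, i + 2 ^ j ≤ 2 ^ k → (M * a j i) ^ 2 ≤ ((M * B) ^ 2 * r ^ j) ^ 2 ^ j := by
  induction j with
  | zero =>
    intro i _
    have hi := ha 0 i
    simp only [pow_zero, mul_one, pow_one]
    grw [hB i]
  | succ j ih =>
    intro i hi
    rw [pow_succ 2 j, mul_two] at hi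
    have hj := Nat.two_pow_pos j
    have hpos : 0 ≤ M * a (j + 1) i := mul_nonneg hM (ha _ _)
    calc (M * a (j + 1) i) ^ 2
        ≤ (M * (M * r ^ 2 ^ j * (a j (i + 2 ^ j) * a j i))) ^ 2 := by
          gcongr
          exact hstep j i (by rw [pow_succ 2 j]; omega)
      _ = (r ^ 2 ^ j) ^ 2 * ((M * a j (i + 2 ^ j)) ^ 2 * (M * a j i) ^ 2) := by ring
      _ ≤ (r ^ 2 ^ j) ^ 2 * (((M * B) ^ 2 * r ^ j) ^ 2 ^ j * ((M * B) ^ 2 * r ^ j) ^ 2 ^ j) := by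
          gcongr
          · exact (sq_nonneg _).trans (ih i (by omega))
          · exact ih (i + 2 ^ j) (by omega)
          · exact ih i (by omega)
      _ = ((M * B) ^ 2 * r ^ (j + 1)) ^ 2 ^ (j + 1) := by
          rw [pow_succ r, ← mul_assoc ((M * B) ^ 2), mul_pow _ r, pow_succ 2 j]
          ring

variable {X : Type*} [TopologicalSpace X] {d p k : ℕ} {θ : X ≃ₜ X} {ψ0 : X → GL (Fin d) ℝ}
  {c r C K M δ : ℝ} {E F : X → Submodule ℝ (Euc d)} {x : X} {e f : Euc d}

theorem IsBoundedGenerator.norm_lin_cocyc_sub_le (hK : IsBoundedGenerator ψ0 K) {m N : ℕ}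
    (hmN : m ≤ N) (hδ : 0 ≤ δ) (hef : (K ^ N) ^ 2 * ‖f - e‖ ≤ δ * ‖f‖) :
    ‖lin (cocyc θ ψ0 m x) f - lin (cocyc θ ψ0 m x) e‖ ≤ δ * ‖lin (cocyc θ ψ0 m x) f‖ := by
  have hKN : 0 < K ^ N := pow_pos (zero_lt_one.trans_le hK.one_le) N
  have hKm : K ^ m ≤ K ^ N := pow_le_pow_right₀ hK.one_le hmN
  refine le_of_mul_le_mul_left ?_ hKN
  calc K ^ N * ‖lin (cocyc θ ψ0 m x) f - lin (cocyc θ ψ0 m x) e‖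
      ≤ K ^ N * (K ^ N * ‖f - e‖) := by
        rw [← map_sub]
        grw [hK.norm_lin_cocyc_le, hKm]
    _ = (K ^ N) ^ 2 * ‖f - e‖ := by ring
    _ ≤ δ * (K ^ N * ‖lin (cocyc θ ψ0 m x) f‖) := by
        grw [hef, hK.norm_le_lin_cocyc θ m x f, hKm]
    _ = K ^ N * (δ * ‖lin (cocyc θ ψ0 m x) f‖) := by ring

theorem sq_mul_topVolume_le (hE : IsEquivariant θ ψ0 E) (hF : IsEquivariant θ ψ0 F)
    (hK : IsBoundedGenerator ψ0 K) (hpd : p ≤ d) (hM : 0 ≤ M) (hr0 : 0 ≤ r) (hr1 : r ≤ 1)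
    (hdouble : ∀ n x, ∀ f ∈ F (θ^[n] x), ∀ e ∈ E (θ^[n] x), f ≠ 0 →
      ‖f - e‖ ≤ r ^ n * ‖f‖ → topVolume (cocyc θ ψ0 (n + n) x) p ≤
        M * r ^ n * (topVolume (cocyc θ ψ0 n (θ^[n] x)) p * topVolume (cocyc θ ψ0 n x) p))
    (hf : f ∈ F x) (he : e ∈ E x) (hf0 : f ≠ 0)
    (hfe : (K ^ 2 ^ k) ^ 2 * ‖f - e‖ ≤ r ^ 2 ^ k * ‖f‖) :
    (M * topVolume (cocyc θ ψ0 (2 ^ k) x) p) ^ 2 ≤ ((M * K ^ p) ^ 2 * r ^ k) ^ 2 ^ k := by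
  refine sq_mul_le_pow_two_pow hM k
    (a := fun j i ↦ topVolume (cocyc θ ψ0 (2 ^ j) (θ^[i] x)) p)
    (fun j i ↦ topVolume_nonneg _ hpd) (fun i ↦ ?_) (fun j i hij ↦ ?_) k 0 (zero_add _).le
  · rw [pow_zero, cocyc_one]
    exact topVolume_le_pow hpd (hK.norm_lin_le _)
  · rw [pow_succ 2 j, mul_two] at hij
    have hj := Nat.two_pow_pos j
    have hadd : θ^[2 ^ j] (θ^[i] x) = θ^[i + 2 ^ j] x := by
      rw [← Function.iterate_add_apply, add_comm]
    have hstep := hdouble (2 ^ j) (θ^[i] x)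
    rw [hadd, ← mul_two, ← pow_succ] at hstep
    refine hstep _ (hF.lin_cocyc_mem _ hf) _ (hE.lin_cocyc_mem _ he) (by simpa using hf0) ?_
    refine (hK.norm_lin_cocyc_sub_le (by omega) (by positivity) hfe).trans ?_
    gcongr 1
    exact pow_le_pow_of_le_one hr0 hr1 (by omega)

namespace IsStableBundle

theorem exists_topVolume_cocyc_add_le (hE : IsStableBundle θ ψ0 p E C r)
    (hF : IsStableBundle θ.symm (revGen θ ψ0) (d - p) F C r) (hgap : HasUniformGap θ ψ0 p c r)
    (hp : 1 ≤ p) (hpd : p < d) (hc : 0 ≤ c) (hr0 : 0 ≤ r) (hr1 : r ≤ 1) :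
    ∃ M, 1 ≤ M ∧ ∀ n x, ∀ f ∈ F (θ^[n] x), ∀ e ∈ E (θ^[n] x), f ≠ 0 →
      ‖f - e‖ ≤ r ^ n * ‖f‖ → topVolume (cocyc θ ψ0 (n + n) x) p ≤
        M * r ^ n * (topVolume (cocyc θ ψ0 n (θ^[n] x)) p * topVolume (cocyc θ ψ0 n x) p) := by
  refine ⟨max 1 (d ^ p * (d ^ p * (p ^ 2 * p.factorial * (c + (6 * C + 2))))), le_max_left _ _,
    fun n x f hf e he hf0 hfe ↦ ?_⟩
  have hnear := hF.nearlyLE_slowSpace n (θ^[n] x)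
  rw [cocyc_revGen_iterate] at hnear
  have hbot : slowSpace (cocyc θ ψ0 n x)⁻¹ (d - p) ≠ ⊥ := by
    rw [← Submodule.one_le_finrank_iff, finrank_slowSpace]
    omega
  obtain ⟨y, hy, z, hz, hy0, hyz⟩ := hnear.exists_norm_sub_le
    (hE.nearlyLE_slowSpace n (θ^[n] x)) hbot (by positivity) (pow_le_one₀ hr0 hr1) hf he hf0 hfe
  have hvol := topVolume_mul_le hp hpd.le (by positivity) (hgap n x) (hgap n (θ^[n] x))
    hy0 hy hz hyz
  rw [← cocyc_add] at hvol
  have hh := topVolume_nonneg (cocyc θ ψ0 n (θ^[n] x)) hpd.le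
  have hg := topVolume_nonneg (cocyc θ ψ0 n x) hpd.le
  grw [hvol, ← le_max_right]
  exact le_of_eq (by ring)

theorem exists_mul_norm_le_norm_sub (hE : IsStableBundle θ ψ0 p E C r)
    (hF : IsStableBundle θ.symm (revGen θ ψ0) (d - p) F C r) (hgap : HasUniformGap θ ψ0 p c r)
    (hK : IsBoundedGenerator ψ0 K) (hp : 1 ≤ p) (hpd : p < d) (hc : 0 ≤ c) (hr0 : 0 < r)
    (hr1 : r < 1) :
    ∃ α > 0, ∀ x, ∀ f ∈ F x, ∀ e ∈ E x, α * ‖f‖ ≤ ‖f - e‖ := by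
  obtain ⟨M, hM, hdouble⟩ := hE.exists_topVolume_cocyc_add_le hF hgap hp hpd hc hr0.le hr1.le
  have hK0 : 0 < K := zero_lt_one.trans_le hK.one_le
  obtain ⟨k, hk⟩ : ∃ k : ℕ, K ^ (2 * p) * (M * K ^ p) ^ 2 * r ^ k < 1 :=
    ((tendsto_const_mul_pow hr0.le hr1 _).eventually_lt_const one_pos).exists
  refine ⟨r ^ 2 ^ k / (K ^ 2 ^ k) ^ 2, by positivity, fun x f hf e he ↦ ?_⟩
  by_contra! hfe
  have hf0 : f ≠ 0 := by
    rintro rfl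
    rw [norm_zero, mul_zero] at hfe
    exact hfe.not_ge (norm_nonneg _)
  rw [div_mul_eq_mul_div, lt_div_iff₀' (by positivity)] at hfe
  have hF' := hF.equivariant.revGen
  rw [revGen_revGen, Homeomorph.symm_symm] at hF'
  have hvol := topVolume_nonneg (cocyc θ ψ0 (2 ^ k) x) hpd.le
  have upper := sq_mul_topVolume_le hE.equivariant hF' hK hpd.le (by linarith) hr0.le hr1.le
    hdouble hf he hf0 hfe.le
  have lower : 1 ≤ (K ^ 2 ^ k) ^ p * topVolume (cocyc θ ψ0 (2 ^ k) x) p :=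
    one_le_pow_mul_topVolume hpd.le (hK.norm_le_lin_cocyc θ _ x)
  have : 1 ≤ (K ^ (2 * p) * (M * K ^ p) ^ 2 * r ^ k) ^ 2 ^ k :=
    calc 1 ≤ ((K ^ 2 ^ k) ^ p * (M * topVolume (cocyc θ ψ0 (2 ^ k) x) p)) ^ 2 := by
          refine one_le_pow₀ (lower.trans ?_)
          gcongr
          exact le_mul_of_one_le_left hvol hM
      _ = (K ^ (2 * p)) ^ 2 ^ k * (M * topVolume (cocyc θ ψ0 (2 ^ k) x) p) ^ 2 := by
          rw [mul_pow, ← pow_mul, ← pow_mul, ← pow_mul]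
          congr 2
          ring
      _ ≤ (K ^ (2 * p)) ^ 2 ^ k * ((M * K ^ p) ^ 2 * r ^ k) ^ 2 ^ k := by grw [upper]
      _ = (K ^ (2 * p) * (M * K ^ p) ^ 2 * r ^ k) ^ 2 ^ k := by rw [← mul_pow, mul_assoc]
  exact this.not_gt (pow_lt_one₀ (by positivity) hk (by positivity))

end IsStableBundle

end Transversality

section Domination

theorem NearlyLE.mul_sv_mul_norm_le {d p : ℕ} {g : GL (Fin d) ℝ} {S : Submodule ℝ (Euc d)}
    {α η : ℝ} {v : Euc d} (h : NearlyLE (slowSpace g p) S η) (hp : 1 ≤ p) (hpd : p ≤ d)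
    (hη0 : 0 ≤ η) (hη1 : η ≤ 1) (hηα : η ≤ α / 2) (hv : ∀ e ∈ S, α * ‖v‖ ≤ ‖v - e‖) :
    α / 4 * (sv (mat g) p * ‖v‖) ≤ ‖lin g v‖ := by
  obtain ⟨z, hz, hvz⟩ := exists_mem_slowSpace_sv_mul_norm_sub_le hp hpd g v
  obtain ⟨e, he, hze⟩ := h z hz
  have hz_norm : ‖z‖ ≤ ‖v‖ + ‖v - z‖ := norm_le_norm_add_norm_sub v z
  have hfar : α / 4 * ‖v‖ ≤ ‖v - z‖ := by
    have : α * ‖v‖ ≤ ‖v - z‖ + (α / 2 * ‖v‖ + 1 * ‖v - z‖) :=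
      calc α * ‖v‖ ≤ ‖v - e‖ := hv e he
        _ ≤ ‖v - z‖ + ‖z - e‖ := norm_sub_le_norm_sub_add_norm_sub v z e
        _ ≤ ‖v - z‖ + (η * ‖v‖ + η * ‖v - z‖) := by grw [hze, hz_norm, mul_add]
        _ ≤ ‖v - z‖ + (α / 2 * ‖v‖ + 1 * ‖v - z‖) := by gcongr
    linarith
  calc α / 4 * (sv (mat g) p * ‖v‖) = sv (mat g) p * (α / 4 * ‖v‖) := mul_left_comm _ _ _
    _ ≤ sv (mat g) p * ‖v - z‖ := mul_le_mul_of_nonneg_left hfar (sv_pos g hp hpd).le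
    _ ≤ ‖lin g v‖ := hvz

variable {X : Type*} [TopologicalSpace X] {d p : ℕ} {θ : X ≃ₜ X} {ψ0 : X → GL (Fin d) ℝ}
  {c r C K α : ℝ} {E F : X → Submodule ℝ (Euc d)}

theorem IsStableBundle.exists_mul_sv_mul_norm_le (hE : IsStableBundle θ ψ0 p E C r)
    (hK : IsBoundedGenerator ψ0 K) (hp : 1 ≤ p) (hpd : p ≤ d) (hr0 : 0 ≤ r) (hr1 : r < 1)
    (hα : 0 < α) (hEF : ∀ x, ∀ f ∈ F x, ∀ e ∈ E x, α * ‖f‖ ≤ ‖f - e‖) :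
    ∃ κ > 0, ∀ n x, ∀ f ∈ F x,
      κ * (sv (mat (cocyc θ ψ0 n x)) p * ‖f‖) ≤ ‖lin (cocyc θ ψ0 n x) f‖ := by
  obtain ⟨N, hN⟩ := eventually_atTop.1 ((tendsto_const_mul_pow hr0 hr1 C).eventually_le_const
    (lt_min one_pos (half_pos hα)))
  have hKN : 0 < K ^ N := pow_pos (zero_lt_one.trans_le hK.one_le) N
  refine ⟨min (α / 4) (((K ^ N) ^ 2)⁻¹), by positivity, fun n x f hf ↦ ?_⟩
  have hsv := (sv_pos (cocyc θ ψ0 n x) hp hpd).le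
  rcases le_total N n with hn | hn
  · grw [min_le_left]
    exact (hE.slowSpace_nearlyLE n x).mul_sv_mul_norm_le hp hpd
      (mul_nonneg hE.nonneg (pow_nonneg hr0 n)) ((hN n hn).trans (min_le_left _ _))
      ((hN n hn).trans (min_le_right _ _)) (hEF x f hf)
  · have hKn : K ^ n ≤ K ^ N := pow_le_pow_right₀ hK.one_le hn
    have hsv_le : sv (mat (cocyc θ ψ0 n x)) p ≤ K ^ N := by
      refine sv_le _ hKN.le (Q := ⊤) ?_ fun v _ ↦ ?_
      · rw [finrank_top, finrank_euclideanSpace_fin]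
        omega
      · grw [act_mat, hK.norm_lin_cocyc_le, hKn]
    grw [min_le_right, inv_mul_le_iff₀ (by positivity), hsv_le, hK.norm_le_lin_cocyc θ n x f, hKn,
      sq, mul_assoc]

theorem IsStableBundle.exists_dominates (hE : IsStableBundle θ ψ0 p E C r)
    (hF : IsStableBundle θ.symm (revGen θ ψ0) (d - p) F C r) (hgap : HasUniformGap θ ψ0 p c r)
    (hK : IsBoundedGenerator ψ0 K) (hp : 1 ≤ p) (hpd : p < d) (hc : 0 < c) (hr0 : 0 < r)
    (hr1 : r < 1) : ∃ c' > 0, Dominates θ ψ0 E F c' r := by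
  obtain ⟨α, hα, htrans⟩ := hE.exists_mul_norm_le_norm_sub hF hgap hK hp hpd hc.le hr0 hr1
  obtain ⟨κ, hκ, hF_growth⟩ :=
    hE.exists_mul_sv_mul_norm_le hK hp hpd.le hr0.le hr1 hα htrans
  have hrev : θ.symm.symm = θ ∧ d - (d - p) = p := ⟨θ.symm_symm, Nat.sub_sub_self hpd.le⟩
  obtain ⟨β, hβ, htrans'⟩ := hF.exists_mul_norm_le_norm_sub
    (by rwa [revGen_revGen, hrev.1, hrev.2]) (hgap.revGen hp hpd) (hK.revGen θ) (by omega)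
    (by omega) hc.le hr0 hr1
  obtain ⟨κ', hκ', hE_growth⟩ := hF.exists_mul_sv_mul_norm_le (hK.revGen θ) (by omega) (by omega)
    hr0.le hr1 hβ htrans'
  refine ⟨c / (κ * κ'), by positivity, fun n x u hu w hw ↦ ?_⟩
  have hE_decay : κ' * ‖lin (cocyc θ ψ0 n x) u‖ ≤ sv (mat (cocyc θ ψ0 n x)) (p + 1) * ‖u‖ := by
    have := hE_growth n (θ^[n] x) _ (hE.equivariant.lin_cocyc_mem n hu)
    rwa [cocyc_revGen_iterate, sv_inv (q := p + 1) _ (by omega) (by omega) (by omega), lin_inv,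
      LinearEquiv.symm_apply_apply, mul_left_comm,
      inv_mul_le_iff₀ (sv_pos _ (by omega) hpd)] at this
  rw [div_mul_eq_mul_div, div_mul_eq_mul_div, le_div_iff₀ (by positivity)]
  calc ‖lin (cocyc θ ψ0 n x) u‖ * ‖w‖ * (κ * κ')
      = κ * (κ' * ‖lin (cocyc θ ψ0 n x) u‖ * ‖w‖) := by ring
    _ ≤ κ * (c * r ^ n * sv (mat (cocyc θ ψ0 n x)) p * ‖u‖ * ‖w‖) := by grw [hE_decay, hgap n x]
    _ = c * r ^ n * (κ * (sv (mat (cocyc θ ψ0 n x)) p * ‖w‖) * ‖u‖) := by ring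
    _ ≤ c * r ^ n * (‖lin (cocyc θ ψ0 n x) w‖ * ‖u‖) := by grw [hF_growth n x w hw]

theorem isCompl_of_mul_norm_le_norm_sub {S T : Submodule ℝ (Euc d)} (hα : 0 < α)
    (h : ∀ f ∈ T, ∀ e ∈ S, α * ‖f‖ ≤ ‖f - e‖)
    (hST : d ≤ Module.finrank ℝ S + Module.finrank ℝ T) : IsCompl S T := by
  have hdisj : Disjoint S T := by
    refine Submodule.disjoint_def.2 fun v hvS hvT ↦ ?_
    have hle := h v hvT v hvS
    rw [sub_self, norm_zero] at hle
    exact norm_le_zero_iff.1 (nonpos_of_mul_nonpos_right hle hα)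
  refine ⟨hdisj, codisjoint_iff.2 (Submodule.eq_top_of_disjoint S T ?_ hdisj)⟩
  rw [finrank_euclideanSpace_fin]
  exact hST

theorem HasUniformGap.exists_isDominatedSplitting {μ : ℝ}
    (hgap : HasUniformGap θ ψ0 p c (Real.exp (-μ))) (hK : IsBoundedGenerator ψ0 K) (hp : 1 ≤ p)
    (hpd : p < d) (hc : 0 < c) (hμ : 0 < μ) : ∃ E F, IsDominatedSplitting θ ψ0 p E F := by
  have hr0 := Real.exp_pos (-μ)
  have hr1 : Real.exp (-μ) < 1 := Real.exp_lt_one_iff.2 (neg_lt_zero.2 hμ)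
  obtain ⟨E, hE⟩ := hgap.exists_isStableBundle hK hp hpd hc.le hr0.le hr1
  obtain ⟨F, hF⟩ := (hgap.revGen hp hpd).exists_isStableBundle (hK.revGen θ) (by omega)
    (by omega) hc.le hr0.le hr1
  obtain ⟨α, hα, htrans⟩ := hE.exists_mul_norm_le_norm_sub hF hgap hK hp hpd hc.le hr0 hr1
  obtain ⟨c', hc', hdom⟩ := hE.exists_dominates hF hgap hK hp hpd hc hr0 hr1
  have hF_equiv := hF.equivariant.revGen
  rw [revGen_revGen, Homeomorph.symm_symm] at hF_equiv
  have hF_finrank x : Module.finrank ℝ (F x) = p := (hF.finrank_eq x).trans (by omega)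
  refine ⟨E, F, isDominatedSplitting_iff.2 ⟨hF_finrank, fun x ↦ ?_, hE.equivariant, hF_equiv,
    c', hc', μ, hμ, hdom⟩⟩
  refine isCompl_of_mul_norm_le_norm_sub hα (htrans x) ?_
  rw [hE.finrank_eq, hF_finrank]
  omega

end Domination

section CartanAttractor

variable {d q : ℕ} {g : GL (Fin d) ℝ} {δ : ℝ}

theorem exists_orthonormalBasis_eq_toEuclideanCLM {k : Matrix (Fin d) (Fin d) ℝ}
    (hk : k ∈ Matrix.unitaryGroup (Fin d) ℝ) :
    ∃ b : OrthonormalBasis (Fin d) ℝ (Euc d), ∀ i,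
      b i = Matrix.toEuclideanCLM (𝕜 := ℝ) k (EuclideanSpace.basisFun (Fin d) ℝ i) :=
  ⟨(EuclideanSpace.basisFun (Fin d) ℝ).map (Unitary.linearIsometryEquiv
    ⟨_, Unitary.map_mem (Matrix.toEuclideanCLM (n := Fin d) (𝕜 := ℝ)) hk⟩),
    fun i ↦ OrthonormalBasis.map_apply _ _ i⟩

theorem IsCartanAttractor.exists_svd {W : Submodule ℝ (Euc d)}
    (hW : IsCartanAttractor (mat g) q W) :
    ∃ s : SVD d (lin g), W = Submodule.span ℝ (s.left '' {i | (i : ℕ) < q}) := by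
  obtain ⟨k, l, σ, hk, hl, hσ_anti, hσ_nonneg, hg, rfl⟩ := hW
  obtain ⟨u, hu⟩ := exists_orthonormalBasis_eq_toEuclideanCLM hk
  obtain ⟨v, hv⟩ := exists_orthonormalBasis_eq_toEuclideanCLM (Unitary.star_mem hl)
  have hdiag i : Matrix.toEuclideanCLM (𝕜 := ℝ) (Matrix.diagonal σ)
      (EuclideanSpace.basisFun (Fin d) ℝ i) = σ i • EuclideanSpace.basisFun (Fin d) ℝ i := by
    ext j
    rcases eq_or_ne j i with rfl | hji <;>
      simp [Matrix.ofLp_toEuclideanCLM, Matrix.mulVec_diagonal, *]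
  have hmap i : lin g (v i) = σ i • u i := by
    have hgl : mat g * star l = k * Matrix.diagonal σ := by
      rw [hg, mul_assoc, (Unitary.mem_iff.1 hl).2, mul_one]
    calc lin g (v i) = Matrix.toEuclideanCLM (𝕜 := ℝ) (mat g * star l)
          (EuclideanSpace.basisFun (Fin d) ℝ i) := by rw [hv, map_mul]; rfl
      _ = Matrix.toEuclideanCLM (𝕜 := ℝ) k (Matrix.toEuclideanCLM (𝕜 := ℝ) (Matrix.diagonal σ)
          (EuclideanSpace.basisFun (Fin d) ℝ i)) := by rw [hgl, map_mul]; rfl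
      _ = σ i • u i := by rw [hdiag, map_smul, hu]
  have hσ_ne i : σ i ≠ 0 := fun h0 ↦ by
    have hvi := hmap i
    rw [h0, zero_smul, LinearEquiv.map_eq_zero_iff] at hvi
    exact v.orthonormal.ne_zero i hvi
  refine ⟨⟨u, v, σ, hσ_anti, fun i ↦ (hσ_nonneg i).lt_of_ne' (hσ_ne i), hmap⟩, ?_⟩
  congr 1
  ext x
  refine exists_congr fun i ↦ and_congr_right fun _ ↦ ?_
  have hcol : u i = (EuclideanSpace.equiv (Fin d) ℝ).symm fun j ↦ k j i := by
    rw [hu]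
    ext j
    simp [Matrix.ofLp_toEuclideanCLM]
  rw [hcol, eq_comm]

theorem sv_mul_norm_lin_inv_le_of_mem_cartanAttractor (hq : 1 ≤ q) (hqd : q ≤ d) {u : Euc d}
    (hu : u ∈ cartanAttractor (mat g) q) : sv (mat g) q * ‖lin g⁻¹ u‖ ≤ ‖u‖ := by
  have hpos := sv_pos g hq hqd
  rw [cartanAttractor] at hu
  split_ifs at hu with hex
  · obtain ⟨s, hs⟩ := hex.choose_spec.exists_svd
    rw [hs] at hu
    have himage : s.left '' {i | (i : ℕ) < q} = s.symm.right '' {i | (i.rev : ℕ) < q} := by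
      ext x
      constructor
      · rintro ⟨i, hi, rfl⟩
        exact ⟨i.rev, by rwa [Set.mem_ofPred_eq, Fin.rev_rev], by rw [s.symm_right, Fin.rev_rev]⟩
      · rintro ⟨i, hi, rfl⟩
        exact ⟨i.rev, hi, (s.symm_right i).symm⟩
    rw [himage] at hu
    rw [← le_inv_mul_iff₀ hpos]
    exact s.symm.norm_apply_le_of_mem_span (inv_nonneg.2 hpos.le)
      (fun i hi ↦ inv_anti₀ hpos (s.sv_le_val hq hqd hi)) hu
  · rw [(Submodule.mem_bot ℝ).1 hu, map_zero, norm_zero, mul_zero]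

theorem sinAngle_mul_norm_le (v : Euc d) {w : Euc d} (hw : w ≠ 0) :
    sinAngle v w * ‖v‖ ≤ ‖v - w‖ := by
  refine le_of_mul_le_mul_right ?_ (norm_pos_iff.2 hw)
  rw [mul_assoc, sinAngle, InnerProductGeometry.sin_angle_mul_norm_mul_norm]
  refine Real.sqrt_le_iff.2 ⟨by positivity, ?_⟩
  rw [mul_pow, norm_sub_sq_real, real_inner_self_eq_norm_sq, real_inner_self_eq_norm_sq]
  nlinarith [sq_nonneg (‖w‖ ^ 2 - ⟪v, w⟫)]

theorem NearlyLE.grassDist_le {P Q : Submodule ℝ (Euc d)} (h : NearlyLE P Q δ) (hδ0 : 0 ≤ δ)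
    (hδ1 : δ < 1) : grassDist P Q ≤ δ := by
  refine Real.sSup_le ?_ hδ0
  rintro _ ⟨v, hv, hv0, rfl⟩
  obtain ⟨w, hw, hvw⟩ := h v hv
  have hv_pos : 0 < ‖v‖ := norm_pos_iff.2 hv0
  have hw0 : w ≠ 0 := by
    rintro rfl
    rw [sub_zero] at hvw
    nlinarith
  have hbdd : BddBelow {s | ∃ w ∈ Q, w ≠ 0 ∧ s = sinAngle v w} :=
    ⟨0, by rintro _ ⟨w, -, -, rfl⟩; exact InnerProductGeometry.sin_angle_nonneg _ _⟩
  refine (csInf_le hbdd ⟨w, hw, hw0, rfl⟩).trans ?_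
  exact le_of_mul_le_mul_right ((sinAngle_mul_norm_le v hw0).trans hvw) hv_pos

end CartanAttractor

section DominatedSplitting

variable {X : Type*} [TopologicalSpace X] {d p : ℕ} {θ : X ≃ₜ X} {ψ0 : X → GL (Fin d) ℝ}
  {c r K : ℝ} {E F : X → Submodule ℝ (Euc d)}

namespace Dominates

theorem sv_succ_mul_norm_le (h : Dominates θ ψ0 E F c r) (hc : 0 ≤ c) (hr : 0 ≤ r) {x : X}
    (hE : d ≤ p + Module.finrank ℝ (E x)) (n : ℕ) {f : Euc d} (hf : f ∈ F x) :
    sv (mat (cocyc θ ψ0 n x)) (p + 1) * ‖f‖ ≤ c * r ^ n * ‖lin (cocyc θ ψ0 n x) f‖ := by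
  rcases eq_or_ne f 0 with rfl | hf0
  · simp only [norm_zero, mul_zero, map_zero, le_refl]
  have hf_pos : 0 < ‖f‖ := norm_pos_iff.2 hf0
  rw [← le_div_iff₀ hf_pos]
  refine sv_le _ (by positivity) (Q := E x) (by omega) fun e he ↦ ?_
  rw [div_mul_eq_mul_div, le_div_iff₀ hf_pos, mul_assoc, act_mat]
  exact h n x e he f hf

theorem hasUniformGap (h : Dominates θ ψ0 E F c r) (hc : 0 < c) (hr : 0 < r) (hp : 1 ≤ p)
    (hE : ∀ x, d ≤ p + Module.finrank ℝ (E x)) (hF : ∀ x, Module.finrank ℝ (F x) = p) :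
    HasUniformGap θ ψ0 p c r := by
  intro n x
  rw [← div_le_iff₀' (by positivity)]
  refine le_sv _ hp (hF x) fun f hf ↦ ?_
  rw [div_mul_eq_mul_div, div_le_iff₀' (by positivity)]
  exact h.sv_succ_mul_norm_le hc.le hr.le (hE x) n hf

theorem exists_norm_le_mul_norm_add (h : Dominates θ ψ0 E F c r) (hK : IsBoundedGenerator ψ0 K)
    (hr0 : 0 ≤ r) (hr1 : r < 1) :
    ∃ A ≥ 0, ∀ x, ∀ e ∈ E x, ∀ f ∈ F x, ‖f‖ ≤ A * ‖e + f‖ := by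
  obtain ⟨N, hN⟩ := ((tendsto_const_mul_pow hr0 hr1 c).eventually_le_const one_half_pos).exists
  have hKN : 0 < K ^ N := pow_pos (zero_lt_one.trans_le hK.one_le) N
  refine ⟨2 * (K ^ N) ^ 2 + 1, by positivity, fun x e he f hf ↦ ?_⟩
  set g := lin (cocyc θ ψ0 N x)
  have hgrow : ‖f‖ ≤ K ^ N * ‖g f‖ := hK.norm_le_lin_cocyc θ N x f
  have he_norm : ‖e‖ ≤ ‖e + f‖ + ‖f‖ := norm_le_add_norm_add e f
  have hgf : ‖g f‖ ≤ ‖g e‖ + K ^ N * ‖e + f‖ := by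
    have hsum : ‖g e + g f‖ ≤ K ^ N * ‖e + f‖ := by
      rw [← map_add]
      exact hK.norm_lin_cocyc_le θ N x (e + f)
    linarith [norm_le_add_norm_add (g f) (g e), add_comm (g e) (g f) ▸ hsum]
  rcases le_total ‖f‖ ‖e + f‖ with hle | hle
  · exact hle.trans (le_mul_of_one_le_left (norm_nonneg _) (by linarith [sq_nonneg (K ^ N)]))
  rcases (norm_nonneg f).eq_or_lt with hf0 | hf_pos
  · rw [← hf0]
    positivity
  have hdom : ‖g e‖ * ‖f‖ ≤ 1 / 2 * (‖g f‖ * (‖e + f‖ + ‖f‖)) := by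
    grw [h N x e he f hf, hN, he_norm]
  have hgap : ‖g f‖ * (‖f‖ - ‖e + f‖) ≤ 2 * K ^ N * ‖e + f‖ * ‖f‖ := by
    have := mul_le_mul_of_nonneg_right hgf hf_pos.le
    linarith
  have : ‖f‖ - ‖e + f‖ ≤ 2 * (K ^ N) ^ 2 * ‖e + f‖ := by
    refine le_of_mul_le_mul_left ?_ hf_pos
    calc ‖f‖ * (‖f‖ - ‖e + f‖) ≤ K ^ N * ‖g f‖ * (‖f‖ - ‖e + f‖) :=
          mul_le_mul_of_nonneg_right hgrow (sub_nonneg.2 hle)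
      _ = K ^ N * (‖g f‖ * (‖f‖ - ‖e + f‖)) := mul_assoc _ _ _
      _ ≤ K ^ N * (2 * K ^ N * ‖e + f‖ * ‖f‖) := by gcongr
      _ = ‖f‖ * (2 * (K ^ N) ^ 2 * ‖e + f‖) := by ring
  linarith

theorem cartanAttractor_nearlyLE (h : Dominates θ ψ0 E F c r) (hE : IsEquivariant θ ψ0 E)
    (hF : IsEquivariant θ ψ0 F) (hEF : ∀ x, IsCompl (E x) (F x)) (hpd : p < d)
    (hE' : ∀ x, d ≤ p + Module.finrank ℝ (E x)) (hc : 0 ≤ c) (hr : 0 ≤ r) {A : ℝ} (hA0 : 0 ≤ A)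
    (hA : ∀ x, ∀ e ∈ E x, ∀ f ∈ F x, ‖f‖ ≤ A * ‖e + f‖) (n : ℕ) (x : X) :
    NearlyLE (cartanAttractor (mat (cocyc θ ψ0 n x)⁻¹) (d - p)) (E x) (c * A * r ^ n) := by
  intro u hu
  obtain ⟨e, he, f, hf, rfl⟩ := Submodule.mem_sup.1
    ((hEF x).sup_eq_top.ge (Submodule.mem_top (x := u)))
  have hpos := sv_pos (cocyc θ ψ0 n x) (Nat.le_add_left 1 p) hpd
  have hslow := sv_mul_norm_lin_inv_le_of_mem_cartanAttractor (by omega) (by omega) hu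
  rw [sv_inv (q := p + 1) _ (by omega) (by omega) (by omega), inv_inv,
    inv_mul_le_iff₀ hpos] at hslow
  have hangle := hA _ _ (hE.lin_cocyc_mem n he) _ (hF.lin_cocyc_mem n hf)
  rw [← map_add] at hangle
  refine ⟨e, he, le_of_mul_le_mul_left ?_ hpos⟩
  rw [add_sub_cancel_left]
  calc sv (mat (cocyc θ ψ0 n x)) (p + 1) * ‖f‖ ≤ c * r ^ n * ‖lin (cocyc θ ψ0 n x) f‖ :=
        h.sv_succ_mul_norm_le hc hr (hE' x) n hf
    _ ≤ c * r ^ n * (A * (sv (mat (cocyc θ ψ0 n x)) (p + 1) * ‖e + f‖)) := by grw [hangle, hslow]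
    _ = sv (mat (cocyc θ ψ0 n x)) (p + 1) * (c * A * r ^ n * ‖e + f‖) := by ring

end Dominates

namespace IsDominatedSplitting

theorem finrank_left (h : IsDominatedSplitting θ ψ0 p E F) (x : X) :
    p + Module.finrank ℝ (E x) = d := by
  obtain ⟨hF, hEF, -⟩ := h
  rw [← hF x, Submodule.finrank_add_eq_of_isCompl (hEF x).symm, finrank_euclideanSpace_fin]

theorem revGen (h : IsDominatedSplitting θ ψ0 p E F) :
    IsDominatedSplitting θ.symm (revGen θ ψ0) (d - p) F E := by
  have hE_finrank := h.finrank_left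
  rw [isDominatedSplitting_iff] at h ⊢
  obtain ⟨-, hEF, hE, hF, c, hc, μ, hμ, hdom⟩ := h
  exact ⟨fun x ↦ Nat.eq_sub_of_add_eq' (hE_finrank x), fun x ↦ (hEF x).symm, hF.revGen, hE.revGen,
    c, hc, μ, hμ, hdom.revGen hE hF⟩

theorem exists_hasUniformGap (h : IsDominatedSplitting θ ψ0 p E F) (hp : 1 ≤ p) :
    ∃ c > 0, ∃ μ > 0, HasUniformGap θ ψ0 p c (Real.exp (-μ)) := by
  have hE_finrank := h.finrank_left
  obtain ⟨hF_finrank, -, -, -, c, hc, μ, hμ, hdom⟩ := isDominatedSplitting_iff.1 h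
  exact ⟨c, hc, μ, hμ, hdom.hasUniformGap hc (Real.exp_pos _) hp (fun x ↦ (hE_finrank x).ge)
    hF_finrank⟩

theorem exists_forall_grassDist_cartanAttractor_lt (h : IsDominatedSplitting θ ψ0 p E F)
    (hK : IsBoundedGenerator ψ0 K) (hpd : p < d) {ε : ℝ} (hε : 0 < ε) :
    ∃ N, ∀ n, N ≤ n → ∀ x,
      grassDist (cartanAttractor (mat (cocyc θ ψ0 n x)⁻¹) (d - p)) (E x) < ε := by
  have hE_finrank := h.finrank_left
  obtain ⟨-, hEF, hE, hF, c, hc, μ, hμ, hdom⟩ := isDominatedSplitting_iff.1 h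
  have hr0 := (Real.exp_pos (-μ)).le
  have hr1 : Real.exp (-μ) < 1 := Real.exp_lt_one_iff.2 (neg_lt_zero.2 hμ)
  obtain ⟨A, hA0, hA⟩ := hdom.exists_norm_le_mul_norm_add hK hr0 hr1
  obtain ⟨N, hN⟩ := eventually_atTop.1 ((tendsto_const_mul_pow hr0 hr1
    (c * A)).eventually_lt_const (lt_min one_pos hε))
  refine ⟨N, fun n hn x ↦ ?_⟩
  have hnear := hdom.cartanAttractor_nearlyLE hE hF hEF hpd (fun x ↦ (hE_finrank x).ge) hc.le hr0
    hA0 hA n x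
  have hsmall := lt_min_iff.1 (hN n hn)
  exact (hnear.grassDist_le (by positivity) hsmall.1).trans_lt hsmall.2

end IsDominatedSplitting

end DominatedSplitting

theorem stmt19_general {X : Type*} [TopologicalSpace X] {d : ℕ} (θ : X ≃ₜ X)
    (ψ0 : X → GL (Fin d) ℝ) (K : ℝ) (hK : ∀ x, opNorm (mat (ψ0 x)) ≤ K)
    (hK' : ∀ x, opNorm (mat (ψ0 x)⁻¹) ≤ K) (p : ℕ) (hp1 : 1 ≤ p) (hpd : p ≤ d - 1) :
    ((∃ Ef Ff : X → Submodule ℝ (Euc d), IsDominatedSplitting θ ψ0 p Ef Ff) ↔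
      ∃ c > (0 : ℝ), ∃ μ > (0 : ℝ), ∀ x : X, ∀ n : ℕ,
        sv (mat (cocyc θ ψ0 n x)) (p + 1) / sv (mat (cocyc θ ψ0 n x)) p ≤
          c * Real.exp (-μ * (n : ℝ))) ∧
    (∀ Ef Ff : X → Submodule ℝ (Euc d), IsDominatedSplitting θ ψ0 p Ef Ff →
      ∀ ε > (0 : ℝ), ∃ N : ℕ, ∀ n : ℕ, N ≤ n → ∀ x : X,
        grassDist (cartanAttractor (mat (cocyc θ ψ0 n ((θ.symm : X → X)^[n] x))) p)
            (Ff x) < ε ∧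
        grassDist (cartanAttractor (mat ((cocyc θ ψ0 n x)⁻¹)) (d - p)) (Ef x) < ε) := by
  have hpd' : p < d := by omega
  have hbdd := isBoundedGenerator_of_opNorm_le hK hK'
  simp only [← hasUniformGap_exp_iff hp1 hpd'.le]
  refine ⟨⟨fun ⟨_, _, h⟩ ↦ h.exists_hasUniformGap hp1, fun ⟨_, hc, _, hμ, hgap⟩ ↦
    hgap.exists_isDominatedSplitting hbdd hp1 hpd' hc hμ⟩, fun E F h ε hε ↦ ?_⟩
  obtain ⟨N, hN⟩ := h.exists_forall_grassDist_cartanAttractor_lt hbdd hpd' hε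
  obtain ⟨N', hN'⟩ :=
    h.revGen.exists_forall_grassDist_cartanAttractor_lt (hbdd.revGen θ) (by omega) hε
  simp only [cocyc_revGen, inv_inv, Nat.sub_sub_self hpd'.le] at hN'
  exact ⟨max N N', fun n hn x ↦ ⟨hN' n (le_of_max_le_right hn) x, hN n (le_of_max_le_left hn) x⟩⟩

/-- Theorem 2.4 (Bochi–Gourmelon): a cocycle over a compact base admits a dominated
splitting of index `p` iff the singular value gap `σ_{p+1}/σ_p` of the products
decays uniformly exponentially; in that case the bundles are the uniform limits of
the Cartan attractors `F_x = lim U_p(ψ^n_{θ^{-n} x})`, `E_x = lim U_{d-p}((ψ^n_x)⁻¹)`. -/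
theorem stmt19 {X : Type*} [MetricSpace X] [CompactSpace X] {d : ℕ}
    (θ : X ≃ₜ X) (ψ0 : X → GL (Fin d) ℝ) (hψ : Continuous ψ0)
    (p : ℕ) (hp1 : 1 ≤ p) (hpd : p ≤ d - 1) :
    ((∃ Ef Ff : X → Submodule ℝ (Euc d), IsDominatedSplitting θ ψ0 p Ef Ff) ↔
      ∃ c > (0 : ℝ), ∃ μ > (0 : ℝ), ∀ x : X, ∀ n : ℕ,
        sv (mat (cocyc θ ψ0 n x)) (p + 1) / sv (mat (cocyc θ ψ0 n x)) p ≤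
          c * Real.exp (-μ * (n : ℝ))) ∧
    (∀ Ef Ff : X → Submodule ℝ (Euc d), IsDominatedSplitting θ ψ0 p Ef Ff →
      ∀ ε > (0 : ℝ), ∃ N : ℕ, ∀ n : ℕ, N ≤ n → ∀ x : X,
        grassDist (cartanAttractor (mat (cocyc θ ψ0 n ((θ.symm : X → X)^[n] x))) p)
            (Ff x) < ε ∧
        grassDist (cartanAttractor (mat ((cocyc θ ψ0 n x)⁻¹)) (d - p)) (Ef x) < ε) := by
  obtain ⟨K, hK⟩ := exists_opNorm_le hψ
  obtain ⟨K', hK'⟩ := exists_opNorm_le hψ.inv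
  exact stmt19_general θ ψ0 (max K K') (fun x ↦ (hK x).trans (le_max_left _ _))
    (fun x ↦ (hK' x).trans (le_max_right _ _)) p hp1 hpd

end Paper
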